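/- Growth lemma in the unit ball. For every integer n ≥ 2, reals 0 < λ ≤ Λ, exponents q > n and p with n ≤ p ≤ q, d₀ ∈ (0,1/4], K > 0, and every ν > 0, there exist constants k > 0 and a > 0 such that the following holds. Let b, f : B₁ → ℝ be continuous with b ≥ 0, f ≥ 0, ‖b‖_{L^q(B₁)} ≤ K and ‖f‖_{L^p(B₁)} + ‖f‖_{L^q({x ∈ B₁ : 1−|x| < d₀})} ≤ a, and let u be a C² function on B₁ with u ≥ 0 and L⁻[u] ≤ f in B₁. If |{x ∈ B₁ : u(x) ≥ 1−|x|}| ≥ ν·|B₁|, then u(x) > k·(1−|x|) for all x ∈ B₁. -/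

import Mathlib

open MeasureTheory
open scoped ENNReal

/-- The Pucci minimal extremal operator `𝓜⁻(M)` with ellipticity constants `lam ≤ Lam`:
the infimum of `tr(A*M)` over symmetric matrices `A` with `lam•I ≤ A ≤ Lam•I`. -/
noncomputable def pucciMinus (n : ℕ) (lam Lam : ℝ) (M : Matrix (Fin n) (Fin n) ℝ) : ℝ :=
  sInf { t : ℝ | ∃ A : Matrix (Fin n) (Fin n) ℝ, A.IsSymm ∧
    (A - lam • (1 : Matrix (Fin n) (Fin n) ℝ)).PosSemidef ∧
    (Lam • (1 : Matrix (Fin n) (Fin n) ℝ) - A).PosSemidef ∧ t = (A * M).trace }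

/-- The Pucci maximal extremal operator `𝓜⁺(M)`. -/
noncomputable def pucciPlus (n : ℕ) (lam Lam : ℝ) (M : Matrix (Fin n) (Fin n) ℝ) : ℝ :=
  sSup { t : ℝ | ∃ A : Matrix (Fin n) (Fin n) ℝ, A.IsSymm ∧
    (A - lam • (1 : Matrix (Fin n) (Fin n) ℝ)).PosSemidef ∧
    (Lam • (1 : Matrix (Fin n) (Fin n) ℝ) - A).PosSemidef ∧ t = (A * M).trace }

/-- The Hessian matrix `D²u(x)` of `u` at `x`. -/
noncomputable def hess (n : ℕ) (u : EuclideanSpace ℝ (Fin n) → ℝ)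
    (x : EuclideanSpace ℝ (Fin n)) : Matrix (Fin n) (Fin n) ℝ :=
  fun i j => fderiv ℝ (fun y => fderiv ℝ u y (EuclideanSpace.single j (1 : ℝ))) x
    (EuclideanSpace.single i (1 : ℝ))

/-- The euclidean norm `|Du(x)|` of the gradient of `u` at `x`. -/
noncomputable def gradNorm (n : ℕ) (u : EuclideanSpace ℝ (Fin n) → ℝ)
    (x : EuclideanSpace ℝ (Fin n)) : ℝ := ‖fderiv ℝ u x‖

/-- The `L^p` norm `(∫_E |g|^p)^(1/p)`, as a Lebesgue integral valued in `[0,∞]`. -/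
noncomputable def LpNormE (n : ℕ) (p : ℝ) (g : EuclideanSpace ℝ (Fin n) → ℝ)
    (E : Set (EuclideanSpace ℝ (Fin n))) : ℝ≥0∞ :=
  (∫⁻ x in E, ENNReal.ofReal (|g x| ^ p)) ^ (1 / p)

/-- The last (`n`-th) coordinate `x_n` of a point of `ℝⁿ`. -/
def lastC (n : ℕ) (hn : 1 ≤ n) (x : EuclideanSpace ℝ (Fin n)) : ℝ := x ⟨n - 1, by omega⟩

/-- The open half-ball `B_R⁺ = {|x| < R, x_n > 0}`. -/
def halfBall (n : ℕ) (hn : 1 ≤ n) (R : ℝ) : Set (EuclideanSpace ℝ (Fin n)) :=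
  {x | ‖x‖ < R ∧ 0 < lastC n hn x}

/-- The flat boundary part `B_R⁰ = {|x| ≤ R, x_n = 0}`. -/
def flatB (n : ℕ) (hn : 1 ≤ n) (R : ℝ) : Set (EuclideanSpace ℝ (Fin n)) :=
  {x | ‖x‖ ≤ R ∧ lastC n hn x = 0}

/-- The norm `‖g‖_{L^{p,q}(B_R⁺)} = ‖g‖_{L^p(B_R⁺)} + ‖g‖_{L^q(B_R⁺ ∩ {x_n < d0})}`. -/
noncomputable def LpqNormHB (n : ℕ) (hn : 1 ≤ n) (p q d0 R : ℝ)
    (g : EuclideanSpace ℝ (Fin n) → ℝ) : ℝ≥0∞ :=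
  LpNormE n p g (halfBall n hn R) +
    LpNormE n q g {x ∈ halfBall n hn R | lastC n hn x < d0}

/-- The open cube `Q_ρ` of side `ρ` centered at `(0,…,0,ρ/2)`. -/
def cubeQ (n : ℕ) (hn : 1 ≤ n) (ρ : ℝ) : Set (EuclideanSpace ℝ (Fin n)) :=
  {x | (∀ i : Fin n, i.1 ≠ n - 1 → |x i| < ρ / 2) ∧ 0 < lastC n hn x ∧ lastC n hn x < ρ}

/-- The norm `‖g‖_{L^{p,q}(Q₂)} = ‖g‖_{L^p(Q₂)} + ‖g‖_{L^q(Q₂ ∩ {x_n < d0})}`. -/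
noncomputable def LpqNormQ (n : ℕ) (hn : 1 ≤ n) (p q d0 : ℝ)
    (g : EuclideanSpace ℝ (Fin n) → ℝ) : ℝ≥0∞ :=
  LpNormE n p g (cubeQ n hn 2) +
    LpNormE n q g {x ∈ cubeQ n hn 2 | lastC n hn x < d0}

/-!
The sliding paraboloid form of the Aleksandrov–Bakelman–Pucci estimate controls the minimum of a
supersolution minus a test function by the `L^n` norms of `f` and `|Du| b` on the contact set, the
part of the contact set where the test function is not a strict subsolution being charged with its
measure. Testing with a shifted Gaussian shows that a supersolution which is large on most of a
small ball is bounded below on a larger ball. By the ink-spots covering argument the measure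
condition can be weakened to any fixed positive fraction, and a chain of small balls carries the
bound from the set where `u ≥ d` to every point at a fixed distance from the boundary.

Near the boundary the estimate is applied to a localized Hopf barrier in the layers `d < t`.
Hölder's inequality on balls of radius comparable to `t` makes the error at most `C t^(1 - n/q)`
relative to the barrier; this is summable over the dyadic scales `t = 2⁻ʲ t₀`, so a fixed proportion
of the linear lower bound survives up to the boundary.
-/

section Ellipticity

variable {ι : Type*} {lam Lam : ℝ} {A P : Matrix ι ι ℝ}

lemma trace_mul_nonneg_of_posSemidef [Fintype ι] (hA : A.PosSemidef) (hP : P.PosSemidef) :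
    0 ≤ (A * P).trace := by
  obtain ⟨m, v, rfl⟩ := Matrix.posSemidef_iff_eq_sum_vecMulVec.mp hP
  rw [Finset.mul_sum, Matrix.trace_sum]
  refine Finset.sum_nonneg fun i _ => ?_
  rw [Matrix.mul_vecMulVec, Matrix.trace_vecMulVec, dotProduct_comm]
  exact hA.dotProduct_mulVec_nonneg (v i)

variable [DecidableEq ι]

/-- The coefficient matrices `lam • I ≤ A ≤ Lam • I` allowed in the Pucci operators. Symmetry of
`A` is part of positive semidefiniteness. -/
structure IsElliptic (lam Lam : ℝ) (A : Matrix ι ι ℝ) : Prop where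
  sub_smul_one : (A - lam • (1 : Matrix ι ι ℝ)).PosSemidef
  smul_one_sub : (Lam • (1 : Matrix ι ι ℝ) - A).PosSemidef

namespace IsElliptic

lemma smul_one (hLam : lam ≤ Lam) : IsElliptic lam Lam (lam • (1 : Matrix ι ι ℝ)) where
  sub_smul_one := by simpa only [sub_self] using Matrix.PosSemidef.zero
  smul_one_sub := by
    rw [← sub_smul]
    exact Matrix.PosSemidef.one.smul (sub_nonneg.2 hLam)

variable [Fintype ι]

lemma mul_trace_le_trace_mul (hA : IsElliptic lam Lam A) (hP : P.PosSemidef) :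
    lam * P.trace ≤ (A * P).trace := by
  have h := trace_mul_nonneg_of_posSemidef hA.sub_smul_one hP
  rwa [Matrix.sub_mul, Matrix.trace_sub, Matrix.smul_mul, Matrix.one_mul, Matrix.trace_smul,
    smul_eq_mul, sub_nonneg] at h

lemma trace_le (hA : IsElliptic lam Lam A) : A.trace ≤ Lam * Fintype.card ι := by
  have h := hA.smul_one_sub.trace_nonneg
  rwa [Matrix.trace_sub, Matrix.trace_smul, Matrix.trace_one, smul_eq_mul, sub_nonneg] at h

end IsElliptic

lemma det_le_trace_div_card_pow [Fintype ι] [Nonempty ι] (hP : P.PosSemidef) :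
    P.det ≤ (P.trace / Fintype.card ι) ^ Fintype.card ι := by
  have hcard : (0 : ℝ) < Fintype.card ι := by exact_mod_cast Fintype.card_pos
  have hdet : P.det = ∏ i, hP.1.eigenvalues i := by simpa using hP.1.det_eq_prod_eigenvalues
  have htrace : P.trace = ∑ i, hP.1.eigenvalues i := by
    simpa using hP.1.trace_eq_sum_eigenvalues
  have amgm := Real.geom_mean_le_arith_mean Finset.univ (fun _ => (1 : ℝ)) hP.1.eigenvalues
    (fun _ _ => zero_le_one) (by simpa using hcard) fun i _ => hP.eigenvalues_nonneg i
  simp only [Real.rpow_one, Finset.sum_const, Finset.card_univ, nsmul_eq_mul, mul_one, one_mul,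
    ← hdet, ← htrace] at amgm
  calc P.det = (P.det ^ (Fintype.card ι : ℝ)⁻¹) ^ Fintype.card ι :=
        (Real.rpow_inv_natCast_pow hP.det_nonneg Fintype.card_ne_zero).symm
    _ ≤ _ := pow_le_pow_left₀ (Real.rpow_nonneg hP.det_nonneg _) amgm _

end Ellipticity

section Pucci

variable {n : ℕ} {lam Lam a κ : ℝ} {H H' : Matrix (Fin n) (Fin n) ℝ}

lemma le_pucciMinus (hLam : lam ≤ Lam) (h : ∀ A, IsElliptic lam Lam A → κ ≤ (A * H).trace) :
    κ ≤ pucciMinus n lam Lam H := by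
  have hne := IsElliptic.smul_one (ι := Fin n) hLam
  refine le_csInf ⟨_, _, by simp [Matrix.IsSymm], hne.1, hne.2, rfl⟩ ?_
  rintro t ⟨A, -, hA₁, hA₂, rfl⟩
  exact h A ⟨hA₁, hA₂⟩

lemma trace_one_add_smul_sub_le (hlam : 0 < lam) (hLam : lam ≤ Lam) (ha : 0 < a)
    (hP : (1 + a⁻¹ • (H - H')).PosSemidef)
    (hκ : ∀ A, IsElliptic lam Lam A → κ ≤ (A * H').trace) :
    (1 + a⁻¹ • (H - H')).trace ≤ ((pucciMinus n lam Lam H - κ) / a + Lam * n) / lam := by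
  set P := 1 + a⁻¹ • (H - H') with hPdef
  have hH : H = a • P - a • 1 + H' := by
    rw [hPdef, smul_add, smul_smul, mul_inv_cancel₀ ha.ne', one_smul]
    abel
  have key : a * (lam * P.trace) - a * (Lam * n) + κ ≤ pucciMinus n lam Lam H := by
    refine le_pucciMinus hLam fun A hA => ?_
    calc a * (lam * P.trace) - a * (Lam * n) + κ
        ≤ a * (A * P).trace - a * A.trace + (A * H').trace := by
          gcongr
          · exact hA.mul_trace_le_trace_mul hP
          · simpa only [Fintype.card_fin] using hA.trace_le
          · exact hκ A hA
      _ = (A * H).trace := by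
          conv_rhs => rw [hH]
          simp [Matrix.mul_add, Matrix.mul_sub, Matrix.trace_smul]
  rw [le_div_iff₀ hlam, ← sub_le_iff_le_add, le_div_iff₀ ha]
  linarith

end Pucci

section SecondDerivative

variable {E : Type*} [NormedAddCommGroup E] [NormedSpace ℝ E]

lemma deriv_deriv_nonneg_of_isLocalMin {ψ : ℝ → ℝ} {x : ℝ} (hcont : ContinuousAt ψ x)
    (hmin : IsLocalMin ψ x) : 0 ≤ deriv (deriv ψ) x := by
  by_contra! hneg
  have hmax := isLocalMax_of_deriv_deriv_neg hneg hmin.deriv_eq_zero hcont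
  have hconst : ψ =ᶠ[nhds x] fun _ => ψ x := by
    filter_upwards [hmin, hmax] with s using fun h₁ h₂ => le_antisymm h₂ h₁
  have hzero : deriv ψ =ᶠ[nhds x] fun _ => 0 := by simpa using hconst.deriv
  simp [hzero.deriv_eq] at hneg

lemma differentiableAt_fderiv_of_contDiffAt {f : E → ℝ} {x : E} (hf : ContDiffAt ℝ 2 f x) :
    DifferentiableAt ℝ (fderiv ℝ f) x :=
  (hf.fderiv_right (m := 1) (by norm_num)).differentiableAt (by norm_num)

lemma eventually_differentiableAt_of_contDiffAt {f : E → ℝ} {x : E} (hf : ContDiffAt ℝ 2 f x) :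
    ∀ᶠ y in nhds x, DifferentiableAt ℝ f y :=
  (hf.eventually (by simp)).mono fun _ hy => hy.differentiableAt (by norm_num)

lemma fderiv_fderiv_nonneg_of_isLocalMin {f : E → ℝ} {x : E} (hf : ContDiffAt ℝ 2 f x)
    (hmin : IsLocalMin f x) (v : E) : 0 ≤ fderiv ℝ (fderiv ℝ f) x v v := by
  have hline (s : ℝ) : HasDerivAt (fun s : ℝ => x + s • v) v s := by
    simpa using ((hasDerivAt_id s).smul_const v).const_add x
  have hcont : Filter.Tendsto (fun s : ℝ => x + s • v) (nhds 0) (nhds x) := by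
    simpa using (hline 0).continuousAt.tendsto
  have hderiv : deriv (fun s : ℝ => f (x + s • v)) =ᶠ[nhds 0] fun s => fderiv ℝ f (x + s • v) v :=
    (hcont.eventually (eventually_differentiableAt_of_contDiffAt hf)).mono fun s hs =>
      (hs.hasFDerivAt.comp_hasDerivAt s (hline s)).deriv
  have hderiv₂ : HasDerivAt (fun s : ℝ => fderiv ℝ f (x + s • v) v)
      (fderiv ℝ (fderiv ℝ f) x v v) 0 := by
    have h : HasFDerivAt (fderiv ℝ f) (fderiv ℝ (fderiv ℝ f) x) (x + (0 : ℝ) • v) := by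
      simpa using (differentiableAt_fderiv_of_contDiffAt hf).hasFDerivAt
    have h' : HasDerivAt (fun s : ℝ => fderiv ℝ f (x + s • v)) (fderiv ℝ (fderiv ℝ f) x v) 0 :=
      h.comp_hasDerivAt 0 (hline 0)
    exact (h'.clm_apply (hasDerivAt_const (0 : ℝ) v)).congr_deriv (by simp)
  rw [← hderiv₂.deriv, ← hderiv.deriv_eq]
  refine deriv_deriv_nonneg_of_isLocalMin ?_ ?_
  · have hfx : Filter.Tendsto f (nhds x) (nhds (f (x + (0 : ℝ) • v))) := by
      simpa using hf.continuousAt.tendsto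
    exact hfx.comp hcont
  · filter_upwards [hcont.eventually hmin] with s hs
    simpa using hs

lemma fderiv_fderiv_add {f g : E → ℝ} {x : E} (hf : ContDiffAt ℝ 2 f x)
    (hg : ContDiffAt ℝ 2 g x) :
    fderiv ℝ (fderiv ℝ (f + g)) x = fderiv ℝ (fderiv ℝ f) x + fderiv ℝ (fderiv ℝ g) x := by
  have h : fderiv ℝ (f + g) =ᶠ[nhds x] fderiv ℝ f + fderiv ℝ g := by
    filter_upwards [eventually_differentiableAt_of_contDiffAt hf,
      eventually_differentiableAt_of_contDiffAt hg] with y hfy hgy using fderiv_add hfy hgy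
  rw [h.fderiv_eq, fderiv_add (differentiableAt_fderiv_of_contDiffAt hf)
    (differentiableAt_fderiv_of_contDiffAt hg)]

end SecondDerivative

section Paraboloid

variable {E : Type*} [NormedAddCommGroup E] [InnerProductSpace ℝ E]

lemma hasFDerivAt_norm_sub_sq (c x : E) :
    HasFDerivAt (fun y => ‖y - c‖ ^ 2) ((2 : ℝ) • innerSL ℝ (x - c)) x := by
  refine ((hasFDerivAt_id x).sub_const c).norm_sq.congr_fderiv ?_
  ext v
  simp

lemma hasFDerivAt_smul_innerSL_sub (a : ℝ) (c x : E) :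
    HasFDerivAt (fun y => a • innerSL ℝ (y - c)) (a • innerSL ℝ) x :=
  ((innerSL ℝ).hasFDerivAt.comp x ((hasFDerivAt_id x).sub_const c)).const_smul a

variable {h : E → ℝ} {x y : E} {a : ℝ}

lemma fderiv_paraboloid (a : ℝ) (c : E) :
    fderiv ℝ (fun z => a / 2 * ‖z - c‖ ^ 2) = fun z => a • innerSL ℝ (z - c) := by
  ext1 z
  refine ((hasFDerivAt_norm_sub_sq c z).const_mul (a / 2)).fderiv.trans ?_
  rw [smul_smul, div_mul_cancel₀ a two_ne_zero]

lemma contDiff_paraboloid (a : ℝ) (c : E) : ContDiff ℝ 2 fun z => a / 2 * ‖z - c‖ ^ 2 :=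
  contDiff_const.mul ((contDiff_id.sub contDiff_const).norm_sq ℝ)

lemma fderiv_eq_of_isLocalMin_add_paraboloid (hh : DifferentiableAt ℝ h x)
    (hmin : IsLocalMin (h + fun z => a / 2 * ‖z - y‖ ^ 2) x) :
    fderiv ℝ h x = a • innerSL ℝ (y - x) := by
  have h0 := hmin.fderiv_eq_zero
  rw [fderiv_add hh ((contDiff_paraboloid a y).differentiable (by norm_num) x),
    fderiv_paraboloid] at h0
  rw [eq_neg_of_add_eq_zero_left h0, ← smul_neg, ← map_neg, neg_sub]

lemma neg_mul_norm_sq_le_of_isLocalMin_add_paraboloid (hh : ContDiffAt ℝ 2 h x)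
    (hmin : IsLocalMin (h + fun z => a / 2 * ‖z - y‖ ^ 2) x) (v : E) :
    0 ≤ fderiv ℝ (fderiv ℝ h) x v v + a * ‖v‖ ^ 2 := by
  have hpar := (contDiff_paraboloid a y).contDiffAt (x := x)
  have : 0 ≤ fderiv ℝ (fderiv ℝ (h + fun z => a / 2 * ‖z - y‖ ^ 2)) x v v :=
    fderiv_fderiv_nonneg_of_isLocalMin (hh.add hpar) hmin v
  rw [fderiv_fderiv_add hh hpar, fderiv_paraboloid,
    (hasFDerivAt_smul_innerSL_sub a y x).fderiv] at this
  rwa [← real_inner_self_eq_norm_sq]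

end Paraboloid

section Hessian

variable {n : ℕ} {u v : EuclideanSpace ℝ (Fin n) → ℝ} {x : EuclideanSpace ℝ (Fin n)}

lemma hess_apply (hu : ContDiffAt ℝ 2 u x) (i j : Fin n) :
    hess n u x i j =
      fderiv ℝ (fderiv ℝ u) x (EuclideanSpace.single i 1) (EuclideanSpace.single j 1) := by
  rw [hess, ((differentiableAt_fderiv_of_contDiffAt hu).hasFDerivAt.clm_apply
    (hasFDerivAt_const _ _)).fderiv]
  simp

lemma isSymm_hess (hu : ContDiffAt ℝ 2 u x) : (hess n u x).IsSymm := by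
  ext i j
  rw [Matrix.transpose_apply, hess_apply hu, hess_apply hu]
  exact hu.isSymmSndFDerivAt (by simp) _ _

lemma hess_sub (hu : ContDiffAt ℝ 2 u x) (hv : ContDiffAt ℝ 2 v x) :
    hess n (u - v) x = hess n u x - hess n v x := by
  have huv : ContDiffAt ℝ 2 (u - v) x := hu.sub hv
  ext i j
  rw [Matrix.sub_apply, eq_sub_iff_add_eq, hess_apply huv, hess_apply hv, hess_apply hu,
    ← add_apply, ← add_apply, ← fderiv_fderiv_add huv hv, sub_add_cancel]

lemma dotProduct_hess_mulVec (hu : ContDiffAt ℝ 2 u x) (w : Fin n → ℝ) :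
    w ⬝ᵥ (hess n u x).mulVec w =
      fderiv ℝ (fderiv ℝ u) x (WithLp.toLp 2 w) (WithLp.toLp 2 w) := by
  have hw : (WithLp.toLp 2 w : EuclideanSpace ℝ (Fin n)) =
      ∑ i, w i • EuclideanSpace.single i (1 : ℝ) := by
    ext j
    simp [Finset.sum_apply, Pi.single_apply]
  simp only [hw, map_sum, map_smul, sum_apply, smul_apply, smul_eq_mul, ← hess_apply hu,
    Finset.mul_sum, dotProduct, Matrix.mulVec]
  rw [Finset.sum_comm]
  exact Finset.sum_congr rfl fun i _ => Finset.sum_congr rfl fun j _ => by ring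

lemma posSemidef_one_add_smul_hess {a : ℝ} (ha : 0 < a) (hu : ContDiffAt ℝ 2 u x)
    (hquad : ∀ v, 0 ≤ fderiv ℝ (fderiv ℝ u) x v v + a * ‖v‖ ^ 2) :
    (1 + a⁻¹ • hess n u x).PosSemidef := by
  refine .of_dotProduct_mulVec_nonneg (Matrix.isHermitian_one.add ?_) fun w => ?_
  · exact (congrArg (a⁻¹ • ·) (isSymm_hess hu) :)
  · have hnorm : ‖(WithLp.toLp 2 w : EuclideanSpace ℝ (Fin n))‖ ^ 2 = w ⬝ᵥ w := by
      rw [EuclideanSpace.norm_sq_eq]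
      simp [dotProduct, pow_two]
    have h := hquad (WithLp.toLp 2 w)
    rw [hnorm, ← dotProduct_hess_mulVec hu] at h
    rw [Matrix.add_mulVec, Matrix.one_mulVec, Matrix.smul_mulVec, dotProduct_add,
      dotProduct_smul, star_trivial, smul_eq_mul]
    have := mul_nonneg (inv_nonneg.2 ha.le) h
    rwa [mul_add, inv_mul_cancel_left₀ ha.ne', add_comm] at this

lemma differentiableAt_gradient (hu : ContDiffAt ℝ 2 u x) :
    DifferentiableAt ℝ (gradient u) x := by
  refine differentiableAt_euclidean.2 fun i => ?_
  have hcoord : (fun y => gradient u y i) =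
      fun y => fderiv ℝ u y (EuclideanSpace.single i (1 : ℝ)) := by
    ext y
    rw [← inner_gradient_left, EuclideanSpace.inner_single_right]
    simp
  rw [hcoord]
  exact (differentiableAt_fderiv_of_contDiffAt hu).clm_apply (differentiableAt_const _)

lemma fderiv_gradient_apply (hu : ContDiffAt ℝ 2 u x) (i j : Fin n) :
    fderiv ℝ (gradient u) x (EuclideanSpace.single i 1) j = hess n u x i j := by
  have h := (differentiableAt_gradient hu).hasFDerivAt.inner ℝ
    (hasFDerivAt_const (EuclideanSpace.single j (1 : ℝ)) x)
  simp only [inner_gradient_left] at h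
  rw [hess, h.fderiv]
  simp [EuclideanSpace.inner_single_right]

lemma det_id_add_smul_fderiv_gradient (hu : ContDiffAt ℝ 2 u x) (c : ℝ) :
    (ContinuousLinearMap.id ℝ (EuclideanSpace ℝ (Fin n)) + c • fderiv ℝ (gradient u) x).det =
      (1 + c • hess n u x).det := by
  rw [ContinuousLinearMap.det,
    ← LinearMap.det_toMatrix (EuclideanSpace.basisFun (Fin n) ℝ).toBasis, ← Matrix.det_transpose]
  congr 1
  ext i j
  rw [Matrix.transpose_apply, LinearMap.toMatrix_apply]
  simp [fderiv_gradient_apply hu, Matrix.one_apply, eq_comm]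

end Hessian

section ABP

variable {n : ℕ} {h u Φ : EuclideanSpace ℝ (Fin n) → ℝ} {U K A : Set (EuclideanSpace ℝ (Fin n))}
  {x₀ : EuclideanSpace ℝ (Fin n)} {a ρ lam Lam : ℝ}

/-- The points of `U` which may be touched from below by a concave paraboloid of opening `a` with
vertex in `Metric.ball x₀ ρ`. -/
def contactSet (h : EuclideanSpace ℝ (Fin n) → ℝ) (U : Set (EuclideanSpace ℝ (Fin n)))
    (x₀ : EuclideanSpace ℝ (Fin n)) (a ρ : ℝ) : Set (EuclideanSpace ℝ (Fin n)) :=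
  {x ∈ U | h x ≤ h x₀ + a / 2 * ρ ^ 2 ∧ ‖fderiv ℝ h x‖ ≤ a * (‖x - x₀‖ + ρ) ∧
    (1 + a⁻¹ • hess n h x).PosSemidef}

lemma isClosed_setOf_posSemidef (n : ℕ) :
    IsClosed {P : Matrix (Fin n) (Fin n) ℝ | P.PosSemidef} := by
  simp only [Matrix.posSemidef_iff_dotProduct_mulVec, Matrix.IsHermitian, Set.ofPred_and,
    Set.ofPred_forall]
  refine (isClosed_eq (by fun_prop) (by fun_prop)).inter (isClosed_iInter fun w => ?_)
  refine isClosed_le (by fun_prop) ?_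
  simp only [dotProduct, Matrix.mulVec]
  fun_prop

lemma measurableSet_contactSet (hU : IsOpen U) (hh : ContDiffOn ℝ 2 h U) :
    MeasurableSet (contactSet h U x₀ a ρ) := by
  have hat (x) (hx : x ∈ U) : ContDiffAt ℝ 2 h x := hh.contDiffAt (hU.mem_nhds hx)
  have hgrad : ContinuousOn (fderiv ℝ h) U := fun x hx =>
    (differentiableAt_fderiv_of_contDiffAt (hat x hx)).continuousAt.continuousWithinAt
  have hhess : ContinuousOn (hess n h) U := by
    refine continuousOn_pi.2 fun i => continuousOn_pi.2 fun j => ?_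
    have hd2 : ContinuousOn (fderiv ℝ (fderiv ℝ h)) U := fun x hx =>
      (((hat x hx).fderiv_right (m := 1) (by norm_num)).fderiv_right (m := 0)
        (by norm_num)).continuousAt.continuousWithinAt
    exact ((hd2.clm_apply continuousOn_const).clm_apply continuousOn_const).congr
      fun x hx => hess_apply (hat x hx) i j
  have hpsd : ContinuousOn (fun x => (1 + a⁻¹ • hess n h x : Matrix (Fin n) (Fin n) ℝ)) U :=
    continuousOn_const.add (by simpa using! hhess.const_smul a⁻¹)
  have hslack : ContinuousOn (fun x => ‖fderiv ℝ h x‖ - a * (‖x - x₀‖ + ρ)) U :=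
    hgrad.norm.sub (by fun_prop)
  obtain ⟨C, hC, hCe⟩ := continuousOn_iff_isClosed.1
    (hh.continuousOn.prodMk (hslack.prodMk hpsd))
    (Set.Iic (h x₀ + a / 2 * ρ ^ 2) ×ˢ Set.Iic 0 ×ˢ {P | P.PosSemidef})
    (isClosed_Iic.prod (isClosed_Iic.prod (isClosed_setOf_posSemidef n)))
  have : contactSet h U x₀ a ρ = C ∩ U := by
    rw [← hCe]
    ext x
    simp only [contactSet, Set.mem_inter_iff, Set.mem_preimage, Set.mem_prod, Set.mem_Iic,
      Set.mem_ofPred_eq, sub_nonpos, and_comm]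
  rw [this]
  exact hC.measurableSet.inter hU.measurableSet

lemma ball_subset_image_contactSet (hK : IsCompact K) (hU : IsOpen U) (hUK : U ⊆ K)
    (hh : ContDiffOn ℝ 2 h U) (hc : ContinuousOn h K) (hx₀ : x₀ ∈ U) (ha : 0 < a)
    (hgap : ∀ x ∈ K, x ∉ U → h x₀ + a / 2 * ρ ^ 2 < h x) :
    Metric.ball x₀ ρ ⊆ (id + a⁻¹ • gradient h) '' contactSet h U x₀ a ρ := by
  intro y hy
  have hyρ : ‖x₀ - y‖ < ρ := by rwa [← dist_eq_norm, dist_comm]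
  obtain ⟨x, hxK, hxmin⟩ := hK.exists_isMinOn ⟨x₀, hUK hx₀⟩
    (hc.add (f := h) (g := fun z => a / 2 * ‖z - y‖ ^ 2) (by fun_prop))
  have hle : h x ≤ h x₀ + a / 2 * ρ ^ 2 := by
    have h₁ : h x + a / 2 * ‖x - y‖ ^ 2 ≤ h x₀ + a / 2 * ‖x₀ - y‖ ^ 2 := hxmin (hUK hx₀)
    have h₂ : a / 2 * ‖x₀ - y‖ ^ 2 ≤ a / 2 * ρ ^ 2 := by gcongr
    have h₃ : 0 ≤ a / 2 * ‖x - y‖ ^ 2 := by positivity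
    linarith
  have hxU : x ∈ U := by_contra fun hxU => (hgap x hxK hxU).not_ge hle
  have hat : ContDiffAt ℝ 2 h x := hh.contDiffAt (hU.mem_nhds hxU)
  have hmin := hxmin.isLocalMin (Filter.mem_of_superset (hU.mem_nhds hxU) hUK)
  have hfd := fderiv_eq_of_isLocalMin_add_paraboloid (hat.differentiableAt (by norm_num)) hmin
  have hgrad : gradient h x = a • (y - x) :=
    ext_inner_right ℝ fun v => by
      rw [inner_gradient_left, hfd, smul_apply, innerSL_apply_apply, real_inner_smul_left,
        smul_eq_mul]
  refine ⟨x, ⟨hxU, hle, ?_, ?_⟩, ?_⟩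
  · rw [hfd, norm_smul, innerSL_apply_norm, Real.norm_of_nonneg ha.le, norm_sub_rev]
    gcongr
    exact (norm_sub_le_norm_sub_add_norm_sub x x₀ y).trans (by gcongr)
  · exact posSemidef_one_add_smul_hess ha hat
      (neg_mul_norm_sq_le_of_isLocalMin_add_paraboloid hat hmin)
  · simp only [Pi.add_apply, Pi.smul_apply, id_eq, hgrad, smul_smul, inv_mul_cancel₀ ha.ne',
      one_smul, add_sub_cancel]

lemma volume_ball_le_lintegral_contactSet (hK : IsCompact K) (hU : IsOpen U) (hUK : U ⊆ K)
    (hh : ContDiffOn ℝ 2 h U) (hc : ContinuousOn h K) (hx₀ : x₀ ∈ U) (ha : 0 < a)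
    (hgap : ∀ x ∈ K, x ∉ U → h x₀ + a / 2 * ρ ^ 2 < h x) :
    volume (Metric.ball x₀ ρ) ≤
      ∫⁻ x in contactSet h U x₀ a ρ, ENNReal.ofReal (1 + a⁻¹ • hess n h x).det := by
  have hat (x) (hx : x ∈ contactSet h U x₀ a ρ) : ContDiffAt ℝ 2 h x :=
    hh.contDiffAt (hU.mem_nhds hx.1)
  have hmeas : MeasurableSet (contactSet h U x₀ a ρ) := measurableSet_contactSet hU hh
  calc volume (Metric.ball x₀ ρ)
      ≤ volume ((id + a⁻¹ • gradient h) '' contactSet h U x₀ a ρ) :=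
        measure_mono (ball_subset_image_contactSet hK hU hUK hh hc hx₀ ha hgap)
    _ ≤ ∫⁻ x in contactSet h U x₀ a ρ,
          ENNReal.ofReal |(ContinuousLinearMap.id ℝ _ + a⁻¹ • fderiv ℝ (gradient h) x).det| :=
        addHaar_image_le_lintegral_abs_det_fderiv volume hmeas fun x hx =>
          ((hasFDerivAt_id x).add ((differentiableAt_gradient
            (hat x hx)).hasFDerivAt.const_smul a⁻¹)).hasFDerivWithinAt
    _ = _ := setLIntegral_congr_fun hmeas fun x hx => by
        rw [det_id_add_smul_fderiv_gradient (hat x hx), abs_of_nonneg hx.2.2.2.det_nonneg]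

/-- The `n`-th root of the volume of the unit ball of `ℝⁿ`, so that `Metric.ball c r` has volume
`(ballConst n * r) ^ n`. -/
noncomputable def ballConst (n : ℕ) : ℝ :=
  volume.real (Metric.ball (0 : EuclideanSpace ℝ (Fin n)) 1) ^ (n : ℝ)⁻¹

lemma ballConst_pos (n : ℕ) : 0 < ballConst n :=
  Real.rpow_pos_of_pos (ENNReal.toReal_pos (Metric.measure_ball_pos _ _ one_pos).ne'
    measure_ball_lt_top.ne) _

lemma volume_ball_eq_pow (hn : 0 < n) (c : EuclideanSpace ℝ (Fin n)) {r : ℝ} (hr : 0 ≤ r) :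
    volume (Metric.ball c r) = ENNReal.ofReal (ballConst n * r) ^ n := by
  have : Nonempty (Fin n) := ⟨⟨0, hn⟩⟩
  rw [Measure.addHaar_ball _ _ hr, finrank_euclideanSpace_fin,
    ← ENNReal.ofReal_toReal (measure_ball_lt_top (μ := volume) (x := (0 : EuclideanSpace ℝ (Fin n)))
      (r := 1)).ne, ← ENNReal.ofReal_mul (by positivity),
    ← ENNReal.ofReal_pow (mul_nonneg (ballConst_pos n).le hr), mul_pow, ballConst,
    Real.rpow_inv_natCast_pow measureReal_nonneg hn.ne', mul_comm]
  rfl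

lemma det_one_add_smul_hess_le (hn : 0 < n) (hlam : 0 < lam) (hLam : lam ≤ Lam) (ha : 0 < a)
    {x : EuclideanSpace ℝ (Fin n)} (hu : ContDiffAt ℝ 2 u x) (hΦ : ContDiffAt ℝ 2 Φ x) {g κ : ℝ}
    (hg : pucciMinus n lam Lam (hess n u x) ≤ g)
    (hκ : ∀ B, IsElliptic lam Lam B → κ ≤ (B * hess n Φ x).trace)
    (hP : (1 + a⁻¹ • hess n (u - Φ) x).PosSemidef) :
    (1 + a⁻¹ • hess n (u - Φ) x).det ≤ (((g - κ) / a + Lam * n) / (lam * n)) ^ n := by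
  have : Nonempty (Fin n) := ⟨⟨0, hn⟩⟩
  have hdet := det_le_trace_div_card_pow hP
  rw [Fintype.card_fin] at hdet
  refine hdet.trans (pow_le_pow_left₀ (div_nonneg hP.trace_nonneg n.cast_nonneg) ?_ n)
  rw [hess_sub hu hΦ] at hP ⊢
  rw [← div_div]
  gcongr
  exact (trace_one_add_smul_sub_le hlam hLam ha hP hκ).trans (by gcongr)

theorem abp_pucci (hn : 0 < n) (hlam : 0 < lam) (hLam : lam ≤ Lam) (hK : IsCompact K)
    (hU : IsOpen U) (hUK : U ⊆ K) (hu : ContDiffOn ℝ 2 u U) (hΦ : ContDiffOn ℝ 2 Φ U)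
    (hc : ContinuousOn (u - Φ) K) (hx₀ : x₀ ∈ U) (ha : 0 < a) (hρ : 0 ≤ ρ)
    (hgap : ∀ x ∈ K, x ∉ U → (u - Φ) x₀ + a / 2 * ρ ^ 2 < (u - Φ) x)
    (hA : contactSet (u - Φ) U x₀ a ρ ⊆ A) {g κ : EuclideanSpace ℝ (Fin n) → ℝ}
    (hg : ∀ x ∈ contactSet (u - Φ) U x₀ a ρ, pucciMinus n lam Lam (hess n u x) ≤ g x)
    (hκ : ∀ x ∈ contactSet (u - Φ) U x₀ a ρ, ∀ B, IsElliptic lam Lam B →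
      κ x ≤ (B * hess n Φ x).trace) :
    ENNReal.ofReal (ballConst n * ρ) ≤
      eLpNorm (fun x => ((g x - κ x) / a + Lam * n) / (lam * n)) n (volume.restrict A) := by
  have hh : ContDiffOn ℝ 2 (u - Φ) U := hu.sub hΦ
  refine (ENNReal.pow_le_pow_left_iff hn.ne').1 ?_
  calc ENNReal.ofReal (ballConst n * ρ) ^ n
      = volume (Metric.ball x₀ ρ) := (volume_ball_eq_pow hn x₀ hρ).symm
    _ ≤ ∫⁻ x in contactSet (u - Φ) U x₀ a ρ, ENNReal.ofReal (1 + a⁻¹ • hess n (u - Φ) x).det :=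
        volume_ball_le_lintegral_contactSet hK hU hUK hh hc hx₀ ha hgap
    _ ≤ ∫⁻ x in contactSet (u - Φ) U x₀ a ρ,
          ‖((g x - κ x) / a + Lam * n) / (lam * n)‖ₑ ^ n := by
        refine setLIntegral_mono' (measurableSet_contactSet hU hh) fun x hx => ?_
        have hxU := hU.mem_nhds hx.1
        rw [← enorm_pow]
        exact (ENNReal.ofReal_le_ofReal (det_one_add_smul_hess_le hn hlam hLam ha
          (hu.contDiffAt hxU) (hΦ.contDiffAt hxU) (hg x hx) (hκ x hx) hx.2.2.2)).trans
          (Real.ofReal_le_enorm _)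
    _ ≤ ∫⁻ x in A, ‖((g x - κ x) / a + Lam * n) / (lam * n)‖ₑ ^ n := lintegral_mono_set hA
    _ = _ := by
        rw [eLpNorm_eq_lintegral_rpow_enorm_toReal (by exact_mod_cast hn.ne') (by simp),
          ← ENNReal.rpow_natCast, ← ENNReal.rpow_mul]
        simp [hn.ne']

end ABP

section Radial

variable {E : Type*} [NormedAddCommGroup E] [InnerProductSpace ℝ E] {G G' : ℝ → ℝ} {G₁ G₂ : ℝ}

lemma hasFDerivAt_radial {c x : E} (hG : HasDerivAt G G₁ (‖x - c‖ ^ 2)) :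
    HasFDerivAt (fun y => G (‖y - c‖ ^ 2)) ((2 * G₁) • innerSL ℝ (x - c)) x := by
  rw [mul_comm, mul_smul]
  exact hG.comp_hasFDerivAt x (hasFDerivAt_norm_sub_sq c x)

lemma norm_fderiv_radial {c x : E} (hG : HasDerivAt G G₁ (‖x - c‖ ^ 2)) :
    ‖fderiv ℝ (fun y => G (‖y - c‖ ^ 2)) x‖ = 2 * |G₁| * ‖x - c‖ := by
  rw [(hasFDerivAt_radial hG).fderiv, norm_smul, innerSL_apply_norm, Real.norm_eq_abs, abs_mul,
    abs_two]

variable {n : ℕ} {c x : EuclideanSpace ℝ (Fin n)}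

lemma hess_radial (hG : ∀ s, HasDerivAt G (G' s) s) (hG' : HasDerivAt G' G₂ (‖x - c‖ ^ 2)) :
    hess n (fun y => G (‖y - c‖ ^ 2)) x =
      (4 * G₂) • Matrix.vecMulVec (x - c) (x - c) + (2 * G' (‖x - c‖ ^ 2)) • 1 := by
  ext i j
  have hfst : (fun y => fderiv ℝ (fun y => G (‖y - c‖ ^ 2)) y (EuclideanSpace.single j (1 : ℝ))) =
      fun y => 2 * G' (‖y - c‖ ^ 2) * inner ℝ (y - c) (EuclideanSpace.single j (1 : ℝ)) := by
    ext y
    rw [(hasFDerivAt_radial (hG _)).fderiv, smul_apply, innerSL_apply_apply, smul_eq_mul]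
  have hsnd := ((hasFDerivAt_radial (c := c) hG').const_mul 2).mul
    (((hasFDerivAt_id x).sub_const c).inner ℝ
      (hasFDerivAt_const (EuclideanSpace.single j (1 : ℝ)) x))
  rw [hess, hfst]
  refine (DFunLike.congr_fun hsnd.fderiv _).trans ?_
  simp [EuclideanSpace.inner_single_right, Matrix.vecMulVec_apply, Matrix.one_apply,
    eq_comm (a := j)]
  ring

lemma le_trace_mul_hess_radial {lam Lam : ℝ} {A : Matrix (Fin n) (Fin n) ℝ}
    (hA : IsElliptic lam Lam A) (hG : ∀ s, HasDerivAt G (G' s) s)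
    (hG' : HasDerivAt G' G₂ (‖x - c‖ ^ 2)) (hG₁ : G' (‖x - c‖ ^ 2) ≤ 0) (hG₂ : 0 ≤ G₂) :
    4 * G₂ * (lam * ‖x - c‖ ^ 2) + 2 * G' (‖x - c‖ ^ 2) * (Lam * n) ≤
      (A * hess n (fun y => G (‖y - c‖ ^ 2)) x).trace := by
  have hsq : lam * ‖x - c‖ ^ 2 ≤ (A * Matrix.vecMulVec (x - c) (x - c)).trace := by
    have h := hA.mul_trace_le_trace_mul (Matrix.posSemidef_vecMulVec_self_star (x - c).ofLp)
    rw [star_trivial, Matrix.trace_vecMulVec] at h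
    rw [EuclideanSpace.norm_sq_eq]
    simpa [dotProduct, pow_two] using h
  have htr : A.trace ≤ Lam * n := by simpa only [Fintype.card_fin] using hA.trace_le
  rw [hess_radial hG hG', Matrix.mul_add, Matrix.mul_smul, Matrix.mul_smul, Matrix.mul_one,
    Matrix.trace_add, Matrix.trace_smul, Matrix.trace_smul, smul_eq_mul, smul_eq_mul]
  exact add_le_add (mul_le_mul_of_nonneg_left hsq (by positivity))
    (mul_le_mul_of_nonpos_left htr (by linarith))

end Radial

section Supersolution

variable {n : ℕ} {lam Lam : ℝ} {Ω U K A S : Set (EuclideanSpace ℝ (Fin n))}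
  {b f u Φ : EuclideanSpace ℝ (Fin n) → ℝ} {x₀ : EuclideanSpace ℝ (Fin n)} {a ρ L : ℝ}

lemma LpNormE_eq_eLpNorm {p : ℝ} (hp : 0 < p) (g : EuclideanSpace ℝ (Fin n) → ℝ)
    (E : Set (EuclideanSpace ℝ (Fin n))) :
    LpNormE n p g E = eLpNorm g (ENNReal.ofReal p) (volume.restrict E) := by
  rw [eLpNorm_eq_lintegral_rpow_enorm_toReal (by simpa using hp) ENNReal.ofReal_ne_top,
    ENNReal.toReal_ofReal hp.le, LpNormE]
  simp_rw [← ofReal_norm, Real.norm_eq_abs, ENNReal.ofReal_rpow_of_nonneg (abs_nonneg _) hp.le]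

lemma eLpNorm_indicator_const_natCast {X : Type*} [MeasurableSpace X] {m : Measure X} {S : Set X}
    (hS : MeasurableSet S) (hn : 0 < n) {L : ℝ} (hL : 0 ≤ L) :
    eLpNorm (S.indicator fun _ => L) n m = ENNReal.ofReal L * m S ^ (1 / (n : ℝ)) := by
  rw [eLpNorm_indicator_const hS (by simpa using hn.ne') (ENNReal.natCast_ne_top n),
    ENNReal.toReal_natCast, ← ofReal_norm, Real.norm_of_nonneg hL]

/-- `u` is a nonnegative classical solution of `L⁻[u] ≤ f` in the open set `Ω`. The drift `b` and
the source `f` are only required to be measurable and may change sign. -/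
structure IsSupersolution (n : ℕ) (lam Lam : ℝ) (Ω : Set (EuclideanSpace ℝ (Fin n)))
    (b f u : EuclideanSpace ℝ (Fin n) → ℝ) : Prop where
  isOpen : IsOpen Ω
  aestronglyMeasurable_drift : AEStronglyMeasurable b (volume.restrict Ω)
  aestronglyMeasurable_source : AEStronglyMeasurable f (volume.restrict Ω)
  contDiffOn : ContDiffOn ℝ 2 u Ω
  nonneg : ∀ x ∈ Ω, 0 ≤ u x
  pucciMinus_sub_le :
    ∀ x ∈ Ω, pucciMinus n lam Lam (hess n u x) - b x * gradNorm n u x ≤ f x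

namespace IsSupersolution

lemma pucciMinus_le (hu : IsSupersolution n lam Lam Ω b f u) {x : EuclideanSpace ℝ (Fin n)}
    (hx : x ∈ Ω) {G : ℝ} (hG : ‖fderiv ℝ u x‖ ≤ G) :
    pucciMinus n lam Lam (hess n u x) ≤ |f x| + G * |b x| := by
  have hdrift : b x * gradNorm n u x ≤ G * |b x| :=
    calc b x * gradNorm n u x ≤ |b x| * ‖fderiv ℝ u x‖ :=
          mul_le_mul_of_nonneg_right (le_abs_self _) (norm_nonneg _)
      _ ≤ |b x| * G := by gcongr
      _ = G * |b x| := mul_comm _ _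
  linarith [hu.pucciMinus_sub_le x hx, le_abs_self (f x)]

theorem abp (hu : IsSupersolution n lam Lam Ω b f u) (hn : 0 < n) (hlam : 0 < lam)
    (hLam : lam ≤ Lam) (hK : IsCompact K) (hKΩ : K ⊆ Ω) (hU : IsOpen U) (hUK : U ⊆ K)
    (hΦ : ContDiffOn ℝ 2 Φ U) (hΦK : ContinuousOn Φ K) (hx₀ : x₀ ∈ U) (ha : 0 < a) (hρ : 0 ≤ ρ)
    (hgap : ∀ x ∈ K, x ∉ U → (u - Φ) x₀ + a / 2 * ρ ^ 2 < (u - Φ) x)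
    (hUA : U ⊆ A) (hAΩ : A ⊆ Ω) (hS : MeasurableSet S) {G : ℝ} (hG₀ : 0 ≤ G) (hL : 0 ≤ L)
    (hG : ∀ x ∈ contactSet (u - Φ) U x₀ a ρ, ‖fderiv ℝ u x‖ ≤ G)
    (htrace : ∀ x ∈ contactSet (u - Φ) U x₀ a ρ, ∀ B, IsElliptic lam Lam B →
      a * (Lam * n) * (1 - S.indicator (fun _ => L) x) ≤ (B * hess n Φ x).trace) :
    ENNReal.ofReal (ballConst n * ρ) ≤
      ENNReal.ofReal (1 / (a * (lam * n))) * (eLpNorm f n (volume.restrict A) +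
        ENNReal.ofReal G * eLpNorm b n (volume.restrict A)) +
      ENNReal.ofReal (Lam / lam * L) * volume S ^ (1 / (n : ℝ)) := by
  have : (0 : ℝ) < n := by exact_mod_cast hn
  have hn1 : (1 : ℝ≥0∞) ≤ n := by exact_mod_cast hn
  set C := 1 / (a * (lam * n)) with hC
  have hf := hu.aestronglyMeasurable_source.mono_measure (Measure.restrict_mono hAΩ le_rfl)
  have hb := hu.aestronglyMeasurable_drift.mono_measure (Measure.restrict_mono hAΩ le_rfl)
  have hind : AEStronglyMeasurable (S.indicator fun _ => Lam / lam * L) (volume.restrict A) :=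
    (measurable_const.indicator hS).aestronglyMeasurable
  have hnorm : eLpNorm (S.indicator fun _ => Lam / lam * L) n (volume.restrict A) ≤
      ENNReal.ofReal (Lam / lam * L) * volume S ^ (1 / (n : ℝ)) :=
    (eLpNorm_mono_measure _ Measure.restrict_le_self).trans_eq
      (eLpNorm_indicator_const_natCast hS hn
        (mul_nonneg (div_nonneg (hlam.le.trans hLam) hlam.le) hL))
  refine (abp_pucci hn hlam hLam hK hU hUK (hu.contDiffOn.mono (hUK.trans hKΩ)) hΦ
    ((hu.contDiffOn.continuousOn.mono hKΩ).sub hΦK) hx₀ ha hρ hgap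
    (fun x hx => hUA hx.1) (fun x hx => hu.pucciMinus_le (hKΩ (hUK hx.1)) (hG x hx))
    htrace).trans ?_
  calc eLpNorm (fun x => ((|f x| + G * |b x| -
          a * (Lam * n) * (1 - S.indicator (fun _ => L) x)) / a + Lam * n) / (lam * n)) n
          (volume.restrict A)
      = eLpNorm ((C • ((fun x => ‖f x‖) + G • fun x => ‖b x‖)) +
          S.indicator fun _ => Lam / lam * L) n (volume.restrict A) := by
        congr 1
        ext x
        simp only [Pi.add_apply, Pi.smul_apply, smul_eq_mul, Real.norm_eq_abs, hC]
        by_cases hx : x ∈ S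
        · simp only [Set.indicator_of_mem hx]
          field_simp
          ring
        · simp only [Set.indicator_of_notMem hx]
          field_simp
          ring
    _ ≤ ENNReal.ofReal C * (eLpNorm f n (volume.restrict A) +
          ENNReal.ofReal G * eLpNorm b n (volume.restrict A)) +
          eLpNorm (S.indicator fun _ => Lam / lam * L) n (volume.restrict A) := by
        refine (eLpNorm_add_le ((hf.norm.add (hb.norm.const_smul G)).const_smul C) hind
          hn1).trans ?_
        rw [eLpNorm_const_smul, ← ofReal_norm, Real.norm_of_nonneg (by positivity : 0 ≤ C)]
        gcongr
        refine (eLpNorm_add_le hf.norm (hb.norm.const_smul G) hn1).trans_eq ?_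
        rw [eLpNorm_const_smul, ← ofReal_norm, Real.norm_of_nonneg hG₀, eLpNorm_norm,
          eLpNorm_norm]
    _ ≤ _ := by gcongr

end IsSupersolution

end Supersolution

section Growth

variable {n : ℕ} {lam Lam μ ε θ : ℝ}

/-- The balls on which supersolutions in `Ω` with drift `b` grow at a fixed rate: their enlargement
by the factor `16` lies in `Ω`, and the drift is `ε`-small in `L^n` on this enlargement. -/
structure IsAdmissibleBall (n : ℕ) (ε : ℝ) (Ω : Set (EuclideanSpace ℝ (Fin n)))
    (b : EuclideanSpace ℝ (Fin n) → ℝ) (c : EuclideanSpace ℝ (Fin n)) (r : ℝ) : Prop where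
  pos : 0 < r
  le_one : r ≤ 1
  closedBall_subset : Metric.closedBall c (16 * r) ⊆ Ω
  eLpNorm_le : eLpNorm b n (volume.restrict (Metric.ball c (16 * r))) ≤ ENNReal.ofReal ε

/-- From measure to pointwise estimate: a supersolution which exceeds `M` on all but the fraction
`μ` of an admissible ball of radius `r` exceeds `θ * M` on the concentric ball of radius `8 * r`,
provided that the source is `ε * M`-small in `L^n`. -/
def GrowthProperty (n : ℕ) (lam Lam μ ε θ : ℝ) : Prop :=
  ∀ ⦃Ω : Set (EuclideanSpace ℝ (Fin n))⦄ ⦃b f u : EuclideanSpace ℝ (Fin n) → ℝ⦄,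
    IsSupersolution n lam Lam Ω b f u →
    ∀ ⦃c : EuclideanSpace ℝ (Fin n)⦄ ⦃r M : ℝ⦄, IsAdmissibleBall n ε Ω b c r → 0 < M →
      eLpNorm f n (volume.restrict (Metric.ball c (16 * r))) ≤ ENNReal.ofReal (ε * M) →
      volume {x ∈ Metric.ball c r | u x < M} ≤ ENNReal.ofReal μ * volume (Metric.ball c r) →
      ∀ x ∈ Metric.ball c (8 * r), θ * M ≤ u x

/-- A multiple of a Gaussian, shifted so as to vanish at distance `16 * r` from the origin, as a
function of the squared norm. -/
noncomputable def growthProfile (α r M s : ℝ) : ℝ :=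
  M * (Real.exp (-(α / r ^ 2) * s) - Real.exp (-(256 * α)))

variable {α r M s : ℝ}

lemma hasDerivAt_const_mul_exp_neg_mul (k m s : ℝ) :
    HasDerivAt (fun s => k * Real.exp (-m * s)) (-(k * m) * Real.exp (-m * s)) s := by
  refine ((((hasDerivAt_id s).const_mul (-m)).exp).const_mul k).congr_deriv ?_
  simp only [id_eq]
  ring

lemma hasDerivAt_growthProfile (α r M s : ℝ) :
    HasDerivAt (growthProfile α r M) (-(M * (α / r ^ 2)) * Real.exp (-(α / r ^ 2) * s)) s := by
  have h : growthProfile α r M = fun s => M * Real.exp (-(α / r ^ 2) * s) -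
      M * Real.exp (-(256 * α)) := by
    ext s
    rw [growthProfile, mul_sub]
  rw [h]
  exact (hasDerivAt_const_mul_exp_neg_mul _ _ _).sub_const _

lemma growthProfile_apply_sq (hr : 0 < r) :
    growthProfile α r M ((16 * r) ^ 2) = 0 := by
  rw [growthProfile, show -(α / r ^ 2) * (16 * r) ^ 2 = -(256 * α) by field_simp; ring, sub_self,
    mul_zero]

lemma growthProfile_lt (hα : 0 < α) (hM : 0 < M) (hs : 0 ≤ s) : growthProfile α r M s < M := by
  have h₁ : Real.exp (-(α / r ^ 2) * s) ≤ 1 :=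
    Real.exp_le_one_iff.2 (mul_nonpos_of_nonpos_of_nonneg (by simpa using by positivity) hs)
  calc growthProfile α r M s < M * 1 :=
        mul_lt_mul_of_pos_left (by linarith [Real.exp_pos (-(256 * α))]) hM
    _ = M := mul_one M

lemma four_mul_mul_exp_le_growthProfile (hα : 0 < α) (hr : 0 < r) (hM : 0 < M)
    (hs : s ≤ (8 * r) ^ 2) :
    4 * α * Real.exp (-(256 * α)) * M ≤ growthProfile α r M s := by
  have hexp : (4 * α + 1) * Real.exp (-(256 * α)) ≤ Real.exp (-(64 * α)) :=
    calc (4 * α + 1) * Real.exp (-(256 * α))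
        ≤ Real.exp (192 * α) * Real.exp (-(256 * α)) := by
          gcongr
          linarith [Real.add_one_le_exp (192 * α)]
      _ = Real.exp (-(64 * α)) := by rw [← Real.exp_add]; ring_nf
  have hs' : -(64 * α) ≤ -(α / r ^ 2) * s :=
    calc -(64 * α) = -(α / r ^ 2) * (8 * r) ^ 2 := by field_simp; ring
      _ ≤ -(α / r ^ 2) * s := mul_le_mul_of_nonpos_left hs (by simpa using by positivity)
  have hexp' := Real.exp_le_exp.2 hs'
  calc 4 * α * Real.exp (-(256 * α)) * M = M * (4 * α * Real.exp (-(256 * α))) := by ring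
    _ ≤ growthProfile α r M s := mul_le_mul_of_nonneg_left (by linarith) hM.le

variable {c x : EuclideanSpace ℝ (Fin n)}

lemma contDiff_growthProfile_norm_sub_sq :
    ContDiff ℝ 2 fun y : EuclideanSpace ℝ (Fin n) => growthProfile α r M (‖y - c‖ ^ 2) :=
  (((contDiff_const.mul ((contDiff_id.sub contDiff_const).norm_sq ℝ)).exp.sub
    contDiff_const)).const_smul M

lemma norm_fderiv_growthProfile_le (hα : 0 < α) (hr : 0 < r) (hM : 0 < M)
    (hx : ‖x - c‖ ≤ 16 * r) :
    ‖fderiv ℝ (fun y => growthProfile α r M (‖y - c‖ ^ 2)) x‖ ≤ 32 * α * M / r := by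
  rw [norm_fderiv_radial (hasDerivAt_growthProfile α r M _), abs_mul, Real.abs_exp, abs_neg,
    abs_of_pos (by positivity)]
  have hexp : Real.exp (-(α / r ^ 2) * ‖x - c‖ ^ 2) ≤ 1 :=
    Real.exp_le_one_iff.2 (by rw [neg_mul, neg_nonpos]; positivity)
  calc 2 * (M * (α / r ^ 2) * Real.exp (-(α / r ^ 2) * ‖x - c‖ ^ 2)) * ‖x - c‖
      ≤ 2 * (M * (α / r ^ 2) * 1) * (16 * r) := by gcongr
    _ = 32 * α * M / r := by field_simp; ring

lemma le_trace_mul_hess_growthProfile (hlam : 0 < lam) (hα : lam * α = Lam * n) (hα₀ : 0 < α)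
    (hr : 0 < r) (hM : 0 < M) (hx : ‖x - c‖ ≤ 16 * r) {A : Matrix (Fin n) (Fin n) ℝ}
    (hA : IsElliptic lam Lam A) (hθ : θ = 2 * α * Real.exp (-(256 * α))) :
    θ * M / r ^ 2 * (Lam * n) *
        (1 - (Metric.ball c r).indicator (fun _ => 1 + Real.exp (256 * α)) x) ≤
      (A * hess n (fun y => growthProfile α r M (‖y - c‖ ^ 2)) x).trace := by
  set E := Real.exp (-(α / r ^ 2) * ‖x - c‖ ^ 2) with hE
  have hE₁ : E ≤ 1 := Real.exp_le_one_iff.2 (by rw [neg_mul, neg_nonpos]; positivity)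
  have hE₀ : Real.exp (-(256 * α)) ≤ E := by
    refine Real.exp_le_exp.2 ?_
    calc -(256 * α) = -(α / r ^ 2 * (16 * r) ^ 2) := by field_simp; ring
      _ ≤ -(α / r ^ 2 * ‖x - c‖ ^ 2) := by gcongr
      _ = _ := by ring
  have htr := le_trace_mul_hess_radial hA (c := c) (x := x) (hasDerivAt_growthProfile α r M)
    (hasDerivAt_const_mul_exp_neg_mul _ _ _)
    (by rw [neg_mul, neg_nonpos]; positivity) (by simp only [neg_mul, neg_neg]; positivity)
  refine le_trans ?_ htr
  rw [← hE, ← hα]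
  by_cases hxr : x ∈ Metric.ball c r
  · rw [Set.indicator_of_mem hxr, hθ]
    have hexp : Real.exp (-(256 * α)) * Real.exp (256 * α) = 1 := by
      rw [← Real.exp_add, neg_add_cancel, Real.exp_zero]
    calc 2 * α * Real.exp (-(256 * α)) * M / r ^ 2 * (lam * α) * (1 - (1 + Real.exp (256 * α)))
        = -(2 * M * α / r ^ 2 * (lam * α) *
            (Real.exp (-(256 * α)) * Real.exp (256 * α))) := by ring
      _ ≤ -(2 * M * α / r ^ 2 * (lam * α) * E) := by rw [hexp]; gcongr
      _ ≤ 4 * (M * (α / r ^ 2) * (α / r ^ 2) * E) * (lam * ‖x - c‖ ^ 2) +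
            -(2 * M * α / r ^ 2 * (lam * α) * E) := le_add_of_nonneg_left (by positivity)
      _ = _ := by ring
  · rw [Set.indicator_of_notMem hxr, hθ]
    have hrx : r ≤ ‖x - c‖ := by rwa [Metric.mem_ball, not_lt, dist_eq_norm] at hxr
    calc 2 * α * Real.exp (-(256 * α)) * M / r ^ 2 * (lam * α) * (1 - 0)
        ≤ 2 * α * E * M / r ^ 2 * (lam * α) * (1 - 0) := by gcongr
      _ = 4 * (M * (α / r ^ 2) * (α / r ^ 2) * E) * (lam * r ^ 2) +
            2 * (-(M * (α / r ^ 2)) * E) * (lam * α) := by field_simp; ring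
      _ ≤ 4 * (M * (α / r ^ 2) * (α / r ^ 2) * E) * (lam * ‖x - c‖ ^ 2) +
            2 * (-(M * (α / r ^ 2)) * E) * (lam * α) := by gcongr
      _ = _ := by ring

variable {Ω U : Set (EuclideanSpace ℝ (Fin n))} {b f u : EuclideanSpace ℝ (Fin n) → ℝ}
  {x₀ : EuclideanSpace ℝ (Fin n)}

lemma sub_growthProfile_add_neg (hα : 0 < α) (hθ : θ = 2 * α * Real.exp (-(256 * α)))
    (hr : 0 < r) (hM : 0 < M) (hx₀ : x₀ ∈ Metric.ball c (8 * r)) (hux₀ : u x₀ < θ * M) :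
    u x₀ - growthProfile α r M (‖x₀ - c‖ ^ 2) + θ * M / r ^ 2 / 2 * r ^ 2 < 0 := by
  rw [mem_ball_iff_norm] at hx₀
  have hΦ : 4 * α * Real.exp (-(256 * α)) * M ≤ growthProfile α r M (‖x₀ - c‖ ^ 2) :=
    four_mul_mul_exp_le_growthProfile hα hr hM (by gcongr)
  have hr' : θ * M / r ^ 2 / 2 * r ^ 2 = θ * M / 2 := by field_simp
  have hθ' : 4 * α * Real.exp (-(256 * α)) * M = 2 * (θ * M) := by rw [hθ]; ring
  have hθM : 0 < θ * M := by rw [hθ]; positivity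
  linarith

lemma norm_fderiv_le_of_mem_contactSet_growthProfile (hα : 0 < α) (hθ : θ ≤ 2 * α)
    (hr : 0 < r) (hM : 0 < M) (hx₀ : x₀ ∈ Metric.ball c (8 * r)) (hu : DifferentiableAt ℝ u x)
    (hx : ‖x - c‖ < 16 * r) (hxc : x ∈ contactSet
      (u - fun y => growthProfile α r M (‖y - c‖ ^ 2)) U x₀ (θ * M / r ^ 2) r) :
    ‖fderiv ℝ u x‖ ≤ 82 * α * M / r := by
  rw [mem_ball_iff_norm] at hx₀
  set Φ := fun y => growthProfile α r M (‖y - c‖ ^ 2)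
  have hfd : fderiv ℝ (u - Φ) x = fderiv ℝ u x - fderiv ℝ Φ x :=
    fderiv_sub hu (contDiff_growthProfile_norm_sub_sq.differentiable two_ne_zero x)
  have hxx₀ : ‖x - x₀‖ ≤ 24 * r := by
    linarith [norm_sub_le_norm_sub_add_norm_sub x c x₀, norm_sub_rev c x₀]
  calc ‖fderiv ℝ u x‖ ≤ ‖fderiv ℝ (u - Φ) x‖ + ‖fderiv ℝ Φ x‖ := by
        rw [hfd]; exact norm_le_norm_sub_add _ _
    _ ≤ θ * M / r ^ 2 * (‖x - x₀‖ + r) + 32 * α * M / r :=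
        add_le_add hxc.2.2.1 (norm_fderiv_growthProfile_le hα hr hM hx.le)
    _ ≤ 2 * α * M / r ^ 2 * (24 * r + r) + 32 * α * M / r := by gcongr
    _ = 82 * α * M / r := by field_simp; ring

lemma IsSupersolution.le_of_lt_of_mem_ball (hu : IsSupersolution n lam Lam Ω b f u) (hn : 0 < n)
    (hlam : 0 < lam) (hLam : lam ≤ Lam) (hα : lam * α = Lam * n) (hα₀ : 0 < α)
    (hθ : θ = 2 * α * Real.exp (-(256 * α))) (hr : 0 < r) (hM : 0 < M)
    (hΩ : Metric.closedBall c (16 * r) ⊆ Ω) (hx₀ : x₀ ∈ Metric.ball c (8 * r))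
    (hux₀ : u x₀ < θ * M) :
    ENNReal.ofReal (ballConst n * r) ≤
      ENNReal.ofReal (1 / (θ * M / r ^ 2 * (lam * n))) *
        (eLpNorm f n (volume.restrict (Metric.ball c (16 * r))) +
          ENNReal.ofReal (82 * α * M / r) *
            eLpNorm b n (volume.restrict (Metric.ball c (16 * r)))) +
      ENNReal.ofReal (Lam / lam * (1 + Real.exp (256 * α))) *
        volume {x ∈ Metric.ball c r | u x < M} ^ (1 / (n : ℝ)) := by
  have hθ₀ : 0 < θ := hθ ▸ by positivity
  have hθα : θ ≤ 2 * α := by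
    rw [hθ]
    exact mul_le_of_le_one_right (by positivity) (Real.exp_le_one_iff.2 (by linarith))
  set Φ := fun y => growthProfile α r M (‖y - c‖ ^ 2) with hΦdef
  have hΦ : ContDiff ℝ 2 Φ := contDiff_growthProfile_norm_sub_sq
  have hball : Metric.ball c (16 * r) ⊆ Ω := Metric.ball_subset_closedBall.trans hΩ
  have hhx₀ : (u - Φ) x₀ + θ * M / r ^ 2 / 2 * r ^ 2 < 0 :=
    sub_growthProfile_add_neg hα₀ hθ hr hM hx₀ hux₀
  have hcontact {x} (hx : x ∈ contactSet (u - Φ) (Metric.ball c (16 * r)) x₀ (θ * M / r ^ 2) r) :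
      x ∈ Ω ∧ ‖x - c‖ < 16 * r ∧ u x < M := by
    refine ⟨hball hx.1, by rw [← dist_eq_norm]; exact hx.1, ?_⟩
    have h₁ : u x - Φ x < 0 := hx.2.1.trans_lt hhx₀
    linarith [growthProfile_lt (r := r) hα₀ hM (sq_nonneg ‖x - c‖)]
  have hmeas : MeasurableSet {x ∈ Metric.ball c r | u x < M} := by
    have hc : ContinuousOn u (Metric.ball c r) := hu.contDiffOn.continuousOn.mono
      ((Metric.ball_subset_ball (by linarith)).trans hball)
    exact (hc.isOpen_inter_preimage Metric.isOpen_ball isOpen_Iio).measurableSet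
  refine hu.abp hn hlam hLam (isCompact_closedBall c (16 * r)) hΩ Metric.isOpen_ball
    Metric.ball_subset_closedBall hΦ.contDiffOn hΦ.continuous.continuousOn
    (Metric.ball_subset_ball (by linarith) hx₀) (by positivity) hr.le ?_ subset_rfl hball hmeas
    (by positivity) (by positivity) ?_ ?_
  · intro x hx hx'
    have hxr : ‖x - c‖ = 16 * r := by
      rw [← dist_eq_norm]
      exact le_antisymm hx (not_lt.1 hx')
    refine hhx₀.trans_le ?_
    rw [Pi.sub_apply, hΦdef]
    simpa only [hxr, growthProfile_apply_sq hr, sub_zero] using hu.nonneg x (hΩ hx)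
  · intro x hx
    obtain ⟨hxΩ, hxr, -⟩ := hcontact hx
    exact norm_fderiv_le_of_mem_contactSet_growthProfile hα₀ hθα hr hM hx₀
      ((hu.contDiffOn.contDiffAt (hu.isOpen.mem_nhds hxΩ)).differentiableAt two_ne_zero) hxr hx
  · intro x hx B hB
    obtain ⟨-, hxr, hxM⟩ := hcontact hx
    have hind : {x ∈ Metric.ball c r | u x < M}.indicator (fun _ => 1 + Real.exp (256 * α)) x =
        (Metric.ball c r).indicator (fun _ => 1 + Real.exp (256 * α)) x := by
      classical simp only [Set.indicator_apply, Set.mem_ofPred_eq, hxM, and_true]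
    rw [hind]
    exact le_trace_mul_hess_growthProfile hlam hα hα₀ hr hM hxr.le hB hθ

lemma volume_rpow_one_div_le {δ : ℝ} {S : Set (EuclideanSpace ℝ (Fin n))} (hn : 0 < n)
    (hδ : 0 ≤ δ) (hr : 0 ≤ r)
    (hS : volume S ≤ ENNReal.ofReal (δ ^ n) * volume (Metric.ball c r)) :
    volume S ^ (1 / (n : ℝ)) ≤ ENNReal.ofReal (δ * (ballConst n * r)) := by
  rw [volume_ball_eq_pow hn c hr, ENNReal.ofReal_pow hδ, ← mul_pow, ← ENNReal.ofReal_mul hδ] at hS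
  calc _ ≤ (ENNReal.ofReal (δ * (ballConst n * r)) ^ n) ^ (1 / (n : ℝ)) := by gcongr
    _ = _ := by rw [one_div, ENNReal.pow_rpow_inv_natCast hn.ne']

lemma two_mul_mul_exp_neg_lt_one (α : ℝ) : 2 * α * Real.exp (-(256 * α)) < 1 := by
  rw [Real.exp_neg, mul_inv_lt_iff₀ (Real.exp_pos _), one_mul]
  rcases le_or_gt α 0 with hα | hα
  · linarith [Real.exp_pos (256 * α)]
  · linarith [Real.add_one_le_exp (256 * α)]

theorem exists_growthProperty (hn : 0 < n) (hlam : 0 < lam) (hLam : lam ≤ Lam) :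
    ∃ μ ε θ : ℝ, 0 < μ ∧ 0 < ε ∧ 0 < θ ∧ θ < 1 ∧ GrowthProperty n lam Lam μ ε θ := by
  have : (0 : ℝ) < n := by exact_mod_cast hn
  have hLam₀ : 0 < Lam := hlam.trans_le hLam
  have hκ := ballConst_pos n
  obtain ⟨α, hα⟩ : ∃ α, lam * α = Lam * n := ⟨Lam * n / lam, by field_simp⟩
  have hα₀ : 0 < α := pos_of_mul_pos_right (hα ▸ by positivity) hlam.le
  obtain ⟨θ, hθ⟩ : ∃ θ, θ = 2 * α * Real.exp (-(256 * α)) := ⟨_, rfl⟩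
  have hθ₀ : 0 < θ := hθ ▸ by positivity
  have hθ₁ : θ < 1 := hθ.trans_lt (two_mul_mul_exp_neg_lt_one α)
  set C := Lam / lam * (1 + Real.exp (256 * α))
  have hC₀ : 0 < C := by positivity
  set δ := 1 / (4 * C) with hδ
  have hδ₀ : 0 < δ := by positivity
  set ε := θ * lam * n * ballConst n / (4 * (1 + 82 * α)) with hε
  have hε₀ : 0 < ε := by positivity
  refine ⟨δ ^ n, ε, θ, by positivity, hε₀, hθ₀, hθ₁, ?_⟩
  intro Ω b f u hu c r M hc hM hf hvol x hx
  have hr := hc.pos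
  have hr₁ := hc.le_one
  have hb := hc.eLpNorm_le
  by_contra! hlt
  have hvol' := volume_rpow_one_div_le hn hδ₀.le hr.le hvol
  refine (hu.le_of_lt_of_mem_ball hn hlam hLam hα hα₀ hθ hr hM hc.closedBall_subset hx
    hlt).not_gt ?_
  have hnorm : 1 / (θ * M / r ^ 2 * (lam * n)) * (ε * M + 82 * α * M / r * ε) ≤
      ballConst n * r / 4 :=
    calc _ = (r + 82 * α) * (ballConst n * r / (4 * (1 + 82 * α))) := by rw [hε]; field_simp
      _ ≤ (1 + 82 * α) * (ballConst n * r / (4 * (1 + 82 * α))) := by gcongr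
      _ = ballConst n * r / 4 := by field_simp
  have hbad : C * (δ * (ballConst n * r)) = ballConst n * r / 4 := by rw [hδ]; field_simp
  calc _ ≤ ENNReal.ofReal (1 / (θ * M / r ^ 2 * (lam * n))) * (ENNReal.ofReal (ε * M) +
          ENNReal.ofReal (82 * α * M / r) * ENNReal.ofReal ε) +
          ENNReal.ofReal C * ENNReal.ofReal (δ * (ballConst n * r)) := by gcongr
    _ = ENNReal.ofReal (1 / (θ * M / r ^ 2 * (lam * n)) * (ε * M + 82 * α * M / r * ε) +
          C * (δ * (ballConst n * r))) := by
        rw [← ENNReal.ofReal_mul (by positivity), ← ENNReal.ofReal_add (by positivity)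
          (by positivity), ← ENNReal.ofReal_mul (by positivity),
          ← ENNReal.ofReal_mul (by positivity),
          ← ENNReal.ofReal_add (by positivity) (by positivity)]
    _ < ENNReal.ofReal (ballConst n * r) := by
        rw [ENNReal.ofReal_lt_ofReal_iff (by positivity)]
        linarith [mul_pos hκ hr]

end Growth

section InkSpots

variable {E : Type*} [NormedAddCommGroup E] [NormedSpace ℝ E]

lemma exists_and_not_two_mul {P : ℝ → Prop} {ρ : ℝ} (hρ : 0 < ρ)
    (hP : ∀ᶠ r in nhdsWithin 0 (Set.Ioi 0), P r) (hPρ : ¬P (2 * ρ)) :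
    ∃ r, 0 < r ∧ r ≤ ρ ∧ P r ∧ ¬P (2 * r) := by
  have hlim : Filter.Tendsto (fun j : ℕ => 2 * ρ * (1 / 2) ^ j) Filter.atTop
      (nhdsWithin 0 (Set.Ioi 0)) := by
    refine tendsto_nhdsWithin_iff.2 ⟨?_, .of_forall fun j => Set.mem_Ioi.2 (by positivity)⟩
    simpa using (tendsto_pow_atTop_nhds_zero_of_lt_one (r := (1 / 2 : ℝ)) (by norm_num)
      (by norm_num)).const_mul (2 * ρ)
  have hex : ∃ j : ℕ, P (2 * ρ * (1 / 2) ^ j) := (hlim.eventually hP).exists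
  classical
  obtain ⟨i, hi⟩ : ∃ i, Nat.find hex = i + 1 :=
    Nat.exists_eq_succ_of_ne_zero fun h => hPρ (by simpa using (Nat.find_eq_zero hex).1 h)
  refine ⟨2 * ρ * (1 / 2) ^ (i + 1), by positivity, ?_, hi ▸ Nat.find_spec hex, ?_⟩
  · calc 2 * ρ * (1 / 2) ^ (i + 1) = ρ * (1 / 2) ^ i := by ring
      _ ≤ ρ := mul_le_of_le_one_right hρ.le (pow_le_one₀ (by norm_num) (by norm_num))
  · rw [show 2 * (2 * ρ * (1 / 2) ^ (i + 1)) = 2 * ρ * (1 / 2) ^ i by ring]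
    exact Nat.find_min hex (by omega)

lemma exists_dist_add_half_le {c x : E} {r ρ : ℝ} (hr : 0 ≤ r) (hrρ : r ≤ ρ)
    (hx : x ∈ Metric.ball c ρ) : ∃ z, dist z c + r / 2 ≤ ρ ∧ dist z x ≤ r / 2 := by
  have hρ : 0 < ρ := Metric.pos_of_mem_ball hx
  have hx' : dist c x ≤ ρ := dist_comm x c ▸ (Metric.mem_ball.1 hx).le
  have ht : r / (2 * ρ) ≤ 1 := (div_le_one (by positivity)).2 (by linarith)
  refine ⟨AffineMap.lineMap x c (r / (2 * ρ)), ?_, ?_⟩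
  · rw [dist_lineMap_right, dist_comm x c, Real.norm_of_nonneg (by linarith)]
    calc (1 - r / (2 * ρ)) * dist c x + r / 2 ≤ (1 - r / (2 * ρ)) * ρ + r / 2 := by
          gcongr
      _ = ρ := by field_simp; ring
  · rw [dist_lineMap_left, dist_comm x c, Real.norm_of_nonneg (by positivity)]
    calc r / (2 * ρ) * dist c x ≤ r / (2 * ρ) * ρ := by gcongr
      _ = r / 2 := by field_simp

variable [FiniteDimensional ℝ E] [MeasurableSpace E] [BorelSpace E] (m : Measure E)
  [m.IsAddHaarMeasure]

lemma addHaar_closedBall_mul_ball (x y : E) {t r : ℝ} (ht : 0 ≤ t) (hr : 0 < r) :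
    m (Metric.closedBall x (t * r)) =
      ENNReal.ofReal t ^ Module.finrank ℝ E * m (Metric.ball y r) := by
  rw [Measure.addHaar_closedBall m x (by positivity), Measure.addHaar_ball_of_pos m y hr, mul_pow,
    ENNReal.ofReal_mul (by positivity), ENNReal.ofReal_pow ht, mul_assoc]

lemma addHaar_closedBall_two_mul_ball (x y : E) {r : ℝ} (hr : 0 < r) :
    m (Metric.closedBall x (2 * r)) = 2 ^ Module.finrank ℝ E * m (Metric.ball y r) := by
  simpa only [ENNReal.ofReal_ofNat] using
    addHaar_closedBall_mul_ball m x y (by norm_num : (0 : ℝ) ≤ 2) hr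

lemma mul_measure_le_five_pow_mul_measure {S G : Set E} (hG : MeasurableSet G) {κ : ℝ≥0∞}
    {R₀ : ℝ} (h : ∀ᵐ x ∂m, x ∈ S → ∃ R, 0 < R ∧ R ≤ R₀ ∧
      κ * m (Metric.closedBall x R) ≤ m (Metric.closedBall x R ∩ G)) :
    κ * m S ≤ 5 ^ Module.finrank ℝ E * m G := by
  set T := {x ∈ S | ∃ R, 0 < R ∧ R ≤ R₀ ∧
    κ * m (Metric.closedBall x R) ≤ m (Metric.closedBall x R ∩ G)}
  have hST : m S ≤ m T := measure_mono_ae (h.mono fun x hx hxS => ⟨hxS, hx hxS⟩)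
  choose! R hR using fun x (hx : x ∈ T) => hx.2
  obtain ⟨w, hwT, hdisj, hcover⟩ :=
    Vitali.exists_disjoint_subfamily_covering_enlargement_closedBall T id R R₀
      (fun x hx => (hR x hx).2.1) 5 (by norm_num)
  simp only [id] at hdisj hcover
  have hwc : w.Countable := hdisj.countable_of_nonempty_interior fun x hx =>
    ⟨x, Metric.ball_subset_interior_closedBall (Metric.mem_ball_self (hR x (hwT hx)).1)⟩
  have hTw : m T ≤ ∑' x : w, m (Metric.closedBall (x : E) (5 * R x)) := by
    refine (measure_mono fun x hx => ?_).trans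
      (measure_biUnion_le m hwc fun x => Metric.closedBall x (5 * R x))
    obtain ⟨y, hy, hxy⟩ := hcover x hx
    exact Set.mem_biUnion hy (hxy (Metric.mem_closedBall_self (hR x hx).1.le))
  calc κ * m S ≤ κ * ∑' x : w, m (Metric.closedBall (x : E) (5 * R x)) := by
        gcongr; exact hST.trans hTw
    _ = ∑' x : w, 5 ^ Module.finrank ℝ E * (κ * m (Metric.closedBall (x : E) (R x))) := by
        rw [← ENNReal.tsum_mul_left]
        congr 1
        ext x
        have hRx := (hR x (hwT x.2)).1
        rw [addHaar_closedBall_mul_ball m (x : E) x (by norm_num) hRx, ENNReal.ofReal_ofNat,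
          Measure.addHaar_closedBall m _ hRx.le, Measure.addHaar_ball_of_pos m _ hRx,
          mul_left_comm]
    _ ≤ ∑' x : w, 5 ^ Module.finrank ℝ E * m (Metric.closedBall (x : E) (R x) ∩ G) := by
        gcongr with x
        exact (hR x (hwT x.2)).2.2
    _ = 5 ^ Module.finrank ℝ E * ∑' x : w, m (Metric.closedBall (x : E) (R x) ∩ G) :=
        ENNReal.tsum_mul_left
    _ ≤ 5 ^ Module.finrank ℝ E * m G := by
        rw [← measure_biUnion hwc (hdisj.mono fun x => Set.inter_subset_left)
          fun x _ => Metric.isClosed_closedBall.measurableSet.inter hG]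
        gcongr
        exact Set.iUnion₂_subset fun x _ => Set.inter_subset_right

variable {m} {A F : Set E} {c : E} {ρ : ℝ} {μ : ℝ≥0∞}

lemma ae_eventually_measure_inter_closedBall_le {W : Set E} (hW : MeasurableSet W) {κ : ℝ≥0∞}
    (hκ : 0 < κ) : ∀ᵐ x ∂m, x ∉ W → ∀ᶠ r in nhdsWithin 0 (Set.Ioi 0),
      m (W ∩ Metric.closedBall x r) ≤ κ * m (Metric.closedBall x r) := by
  filter_upwards [Besicovitch.ae_tendsto_measure_inter_div_of_measurableSet m hW] with x hx hxW
  rw [Set.indicator_of_notMem hxW] at hx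
  filter_upwards [hx.eventually_lt_const hκ, self_mem_nhdsWithin] with r hr hr₀
  exact (ENNReal.div_le_iff (Metric.measure_closedBall_pos _ _ hr₀).ne'
    measure_closedBall_lt_top.ne).1 hr.le

/- At the scale `r` where the complement of `A` passes from negligible to non-negligible around `x`,
a ball inside `Metric.ball c ρ` is almost filled by `A`, so its enlargement lies in `F`, and it
still contains a definite part of `F \ A`. -/
lemma exists_mul_measure_closedBall_le_measure_inter_sdiff (hAc : A ⊆ Metric.ball c ρ)
    (hlt : μ * m (Metric.ball c ρ) < m (Metric.ball c ρ \ A))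
    (hspot : ∀ z s, 0 < s → dist z c + s ≤ ρ → m (Metric.ball z s \ A) ≤ μ * m (Metric.ball z s) →
      Metric.ball z (8 * s) ∩ Metric.ball c ρ ⊆ F) {x : E} (hxA : x ∈ A)
    (hx : ∀ᶠ r in nhdsWithin 0 (Set.Ioi 0), m (Metric.ball c ρ \ A ∩ Metric.closedBall x r) ≤
      μ / 2 ^ Module.finrank ℝ E * m (Metric.closedBall x r)) :
    ∃ R, 0 < R ∧ R ≤ 2 * ρ ∧ μ / 2 ^ Module.finrank ℝ E * m (Metric.closedBall x R) ≤
      m (Metric.closedBall x R ∩ (F \ A)) := by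
  have hρ : 0 < ρ := Metric.pos_of_mem_ball (hAc hxA)
  have hscale {y : E} {r : ℝ} (hr : 0 < r) : μ / 2 ^ Module.finrank ℝ E *
      m (Metric.closedBall x (2 * r)) = μ * m (Metric.ball y r) := by
    rw [addHaar_closedBall_two_mul_ball m x y hr, ← mul_assoc,
      ENNReal.div_mul_cancel (by simp) (by simp)]
  obtain ⟨r, hr, hrρ, hsmall, hlarge⟩ := exists_and_not_two_mul hρ hx (by
    rw [hscale hρ (y := c), not_le, Set.inter_eq_left.2]
    · exact hlt
    · refine Set.sdiff_subset.trans fun y hy => Metric.mem_closedBall.2 ?_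
      linarith [dist_triangle_right y x c, Metric.mem_ball.1 hy, Metric.mem_ball.1 (hAc hxA)])
  obtain ⟨z, hzc, hzx⟩ := exists_dist_add_half_le hr.le hrρ (hAc hxA)
  have hzF : Metric.ball z (8 * (r / 2)) ∩ Metric.ball c ρ ⊆ F := by
    refine hspot z (r / 2) (by linarith) hzc ?_
    rw [← hscale (by linarith), mul_div_cancel₀ r two_ne_zero]
    refine (measure_mono ?_).trans hsmall
    rintro y ⟨hyz, hyA⟩
    rw [Metric.mem_ball] at hyz
    exact ⟨⟨Metric.mem_ball.2 (by linarith [dist_triangle y z c]), hyA⟩,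
      Metric.mem_closedBall.2 (by linarith [dist_triangle y z x])⟩
  refine ⟨2 * r, by linarith, by linarith, (not_le.1 hlarge).le.trans (measure_mono ?_)⟩
  rintro y ⟨⟨hyc, hyA⟩, hyx⟩
  rw [Metric.mem_closedBall] at hyx
  refine ⟨hyx, hzF ⟨Metric.mem_ball.2 ?_, hyc⟩, hyA⟩
  linarith [dist_triangle_right y z x]

theorem one_add_mul_measure_le_measure_of_inkSpots (hA : MeasurableSet A)
    (hAc : A ⊆ Metric.ball c ρ) (hF : MeasurableSet F) (hAF : A ⊆ F) (hμ : 0 < μ)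
    (hlt : μ * m (Metric.ball c ρ) < m (Metric.ball c ρ \ A))
    (hspot : ∀ z s, 0 < s → dist z c + s ≤ ρ → m (Metric.ball z s \ A) ≤ μ * m (Metric.ball z s) →
      Metric.ball z (8 * s) ∩ Metric.ball c ρ ⊆ F) :
    (1 + μ / 10 ^ Module.finrank ℝ E) * m A ≤ m F := by
  have h2 : (2 : ℝ≥0∞) ^ Module.finrank ℝ E ≠ 0 := by simp
  have h2' : (2 : ℝ≥0∞) ^ Module.finrank ℝ E ≠ ∞ := by simp
  have hcov : μ / 2 ^ Module.finrank ℝ E * m A ≤ 5 ^ Module.finrank ℝ E * m (F \ A) := by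
    refine mul_measure_le_five_pow_mul_measure m (hF.diff hA) (R₀ := 2 * ρ) ?_
    filter_upwards [ae_eventually_measure_inter_closedBall_le (m := m)
      (Metric.isOpen_ball.measurableSet.diff hA) (ENNReal.div_pos hμ.ne' h2')] with x hx hxA
    exact exists_mul_measure_closedBall_le_measure_inter_sdiff hAc hlt hspot hxA
      (hx fun h => h.2 hxA)
  have hcov' : μ / 10 ^ Module.finrank ℝ E * m A ≤ m (F \ A) := by
    have h10 : μ / 10 ^ Module.finrank ℝ E * m A =
        μ / 2 ^ Module.finrank ℝ E * m A / 5 ^ Module.finrank ℝ E := by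
      rw [show (10 : ℝ≥0∞) = 2 * 5 by norm_num, mul_pow]
      simp only [div_eq_mul_inv]
      rw [ENNReal.mul_inv (.inl h2) (.inl h2')]
      ring
    rw [h10]
    exact ENNReal.div_le_of_le_mul' hcov
  calc (1 + μ / 10 ^ Module.finrank ℝ E) * m A ≤ m A + m (F \ A) := by
        rw [add_mul, one_mul]; gcongr
    _ = m F := by
        rw [measure_add_sdiff hA.nullMeasurableSet, Set.union_eq_self_of_subset_left hAF]

end InkSpots

section InteriorGrowth

variable {n : ℕ} {lam Lam μ ε θ ν ρ M : ℝ} {Ω : Set (EuclideanSpace ℝ (Fin n))}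
  {b f u : EuclideanSpace ℝ (Fin n) → ℝ} {c z : EuclideanSpace ℝ (Fin n)} {s : ℝ}

lemma IsAdmissibleBall.mono (hc : IsAdmissibleBall n ε Ω b c ρ) (hs : 0 < s)
    (hzs : dist z c + s ≤ ρ) : IsAdmissibleBall n ε Ω b z s where
  pos := hs
  le_one := by linarith [hc.le_one, dist_nonneg (x := z) (y := c)]
  closedBall_subset := (Metric.closedBall_subset_closedBall' (by
    linarith [dist_nonneg (x := z) (y := c)])).trans hc.closedBall_subset
  eLpNorm_le := (eLpNorm_mono_measure b (Measure.restrict_mono (Metric.ball_subset_ball' (by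
    linarith [dist_nonneg (x := z) (y := c)])) le_rfl)).trans hc.eLpNorm_le

namespace GrowthProperty

lemma le_or_mul_volume_le (hG : GrowthProperty n lam Lam μ ε θ) (hμ : 0 < μ) (hθ : θ ≤ 1)
    (hu : IsSupersolution n lam Lam Ω b f u) (hc : IsAdmissibleBall n ε Ω b c ρ) (hM : 0 < M)
    (hf : eLpNorm f n (volume.restrict (Metric.ball c (16 * ρ))) ≤ ENNReal.ofReal (ε * M)) :
    (∀ x ∈ Metric.ball c ρ, θ * M ≤ u x) ∨
      (1 + ENNReal.ofReal μ / 10 ^ n) * volume {x ∈ Metric.ball c ρ | M ≤ u x} ≤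
        volume {x ∈ Metric.ball c ρ | θ * M ≤ u x} := by
  have hρ := hc.pos
  have hcont : ContinuousOn u (Metric.ball c ρ) := hu.contDiffOn.continuousOn.mono
    ((Metric.ball_subset_closedBall.trans
      (Metric.closedBall_subset_closedBall (by linarith))).trans hc.closedBall_subset)
  have hmeas (k : ℝ) : MeasurableSet {x ∈ Metric.ball c ρ | k ≤ u x} := by
    obtain ⟨t, ht, hte⟩ := continuousOn_iff_isClosed.1 hcont (Set.Ici k) isClosed_Ici
    have : {x ∈ Metric.ball c ρ | k ≤ u x} = t ∩ Metric.ball c ρ := by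
      rw [← hte, Set.inter_comm]; rfl
    rw [this]
    exact ht.measurableSet.inter Metric.isOpen_ball.measurableSet
  refine or_iff_not_imp_left.2 fun hnot => ?_
  have hlt : ENNReal.ofReal μ * volume (Metric.ball c ρ) <
      volume (Metric.ball c ρ \ {x ∈ Metric.ball c ρ | M ≤ u x}) := by
    by_contra! hle
    refine hnot fun x hx => hG hu hc hM hf ((measure_mono ?_).trans hle) x
      (Metric.ball_subset_ball (by linarith) hx)
    exact fun y hy => ⟨hy.1, fun h => hy.2.not_ge h.2⟩
  have hink := one_add_mul_measure_le_measure_of_inkSpots (hmeas M) (fun x hx => hx.1)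
    (hmeas (θ * M)) (fun x hx => ⟨hx.1, (mul_le_of_le_one_left hM.le hθ).trans hx.2⟩)
    (ENNReal.ofReal_pos.2 hμ) hlt fun z s hs hzs hvol x hx => ⟨hx.2, ?_⟩
  · rwa [finrank_euclideanSpace_fin] at hink
  · refine hG hu (hc.mono hs hzs) hM ((eLpNorm_mono_measure f (Measure.restrict_mono
      (Metric.ball_subset_ball' ?_) le_rfl)).trans hf) ((measure_mono ?_).trans hvol) x hx.1
    · linarith [dist_nonneg (x := z) (y := c)]
    · exact fun y hy => ⟨hy.1, fun h => hy.2.not_ge h.2⟩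

lemma pow_le_or_pow_mul_volume_le (hG : GrowthProperty n lam Lam μ ε θ) (hμ : 0 < μ) (hε : 0 ≤ ε)
    (hθ₀ : 0 < θ) (hθ : θ ≤ 1) (hu : IsSupersolution n lam Lam Ω b f u)
    (hc : IsAdmissibleBall n ε Ω b c ρ) (hM : 0 < M) (N : ℕ)
    (hf : eLpNorm f n (volume.restrict (Metric.ball c (16 * ρ))) ≤
      ENNReal.ofReal (ε * (θ ^ N * M))) :
    (∀ x ∈ Metric.ball c ρ, θ ^ N * M ≤ u x) ∨
      (1 + ENNReal.ofReal μ / 10 ^ n) ^ N * volume {x ∈ Metric.ball c ρ | M ≤ u x} ≤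
        volume {x ∈ Metric.ball c ρ | θ ^ N * M ≤ u x} := by
  induction N with
  | zero => right; simp
  | succ N ih =>
    have hle : θ ^ (N + 1) * M ≤ θ ^ N * M := by
      gcongr ?_ * M
      exact pow_le_pow_of_le_one hθ₀.le hθ N.le_succ
    have hf' : eLpNorm f n (volume.restrict (Metric.ball c (16 * ρ))) ≤
        ENNReal.ofReal (ε * (θ ^ N * M)) := hf.trans (by gcongr)
    rcases ih hf' with h | h
    · exact .inl fun x hx => hle.trans (h x hx)
    · have hstep := hG.le_or_mul_volume_le hμ hθ hu hc (by positivity) hf'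
      rw [← mul_assoc, ← pow_succ'] at hstep
      refine hstep.imp_right fun h' => le_trans ?_ h'
      rw [pow_succ', mul_assoc]
      gcongr

theorem exists_pow_mul_le (hG : GrowthProperty n lam Lam μ ε θ) (hμ : 0 < μ) (hε : 0 ≤ ε)
    (hθ₀ : 0 < θ) (hθ : θ ≤ 1) (hν : 0 < ν) :
    ∃ N : ℕ, ∀ ⦃Ω b f u⦄, IsSupersolution n lam Lam Ω b f u →
      ∀ ⦃c ρ M⦄, IsAdmissibleBall n ε Ω b c ρ → 0 < M →
        eLpNorm f n (volume.restrict (Metric.ball c (16 * ρ))) ≤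
          ENNReal.ofReal (ε * (θ ^ N * M)) →
        ENNReal.ofReal ν * volume (Metric.ball c ρ) ≤
          volume {x ∈ Metric.ball c ρ | M ≤ u x} →
        ∀ x ∈ Metric.ball c ρ, θ ^ N * M ≤ u x := by
  obtain ⟨N, hN⟩ := pow_unbounded_of_one_lt (1 / ν)
    (lt_add_of_pos_right 1 (show 0 < μ / 10 ^ n by positivity))
  refine ⟨N, fun Ω b f u hu c ρ M hc hM hf hvol => ?_⟩
  refine (hG.pow_le_or_pow_mul_volume_le hμ hε hθ₀ hθ hu hc hM N hf).resolve_right fun h => ?_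
  have hV₀ : volume (Metric.ball c ρ) ≠ 0 := (Metric.measure_ball_pos _ _ hc.pos).ne'
  have hrate : ENNReal.ofReal (1 + μ / 10 ^ n) = 1 + ENNReal.ofReal μ / 10 ^ n := by
    rw [ENNReal.ofReal_add zero_le_one (by positivity), ENNReal.ofReal_one,
      ENNReal.ofReal_div_of_pos (by positivity), ENNReal.ofReal_pow (by norm_num),
      ENNReal.ofReal_ofNat]
  have hbig : ENNReal.ofReal ((1 + μ / 10 ^ n) ^ N * ν) * volume (Metric.ball c ρ) ≤
      1 * volume (Metric.ball c ρ) :=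
    calc _ = (1 + ENNReal.ofReal μ / 10 ^ n) ^ N *
            (ENNReal.ofReal ν * volume (Metric.ball c ρ)) := by
          rw [ENNReal.ofReal_mul (by positivity), ENNReal.ofReal_pow (by positivity), hrate,
            mul_assoc]
      _ ≤ _ := (mul_le_mul_right hvol _).trans h
      _ ≤ 1 * volume (Metric.ball c ρ) := by
          rw [one_mul]
          exact measure_mono fun x hx => hx.1
  rw [ENNReal.mul_le_mul_iff_left hV₀ measure_ball_lt_top.ne, ENNReal.ofReal_le_one] at hbig
  rw [div_lt_iff₀ hν] at hN
  exact hN.not_ge hbig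

lemma pow_mul_le_of_chain (hG : GrowthProperty n lam Lam μ ε θ) (hε : 0 ≤ ε) (hθ₀ : 0 < θ)
    (hθ : θ ≤ 1) (hu : IsSupersolution n lam Lam Ω b f u) (hM : 0 < M)
    {c : ℕ → EuclideanSpace ℝ (Fin n)} {N : ℕ} (hc : ∀ j ≤ N, IsAdmissibleBall n ε Ω b (c j) ρ)
    (hdist : ∀ j < N, dist (c (j + 1)) (c j) ≤ 7 * ρ)
    (hf : eLpNorm f n (volume.restrict Ω) ≤ ENNReal.ofReal (ε * (θ ^ N * M)))
    (hstart : ∀ x ∈ Metric.ball (c 0) ρ, M ≤ u x) :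
    ∀ x ∈ Metric.ball (c N) ρ, θ ^ N * M ≤ u x := by
  suffices h : ∀ j ≤ N, ∀ x ∈ Metric.ball (c j) ρ, θ ^ j * M ≤ u x from h N le_rfl
  intro j
  induction j with
  | zero => simpa using hstart
  | succ j ih =>
    intro hj x hx
    have hcj := hc j (by omega)
    have hfj : eLpNorm f n (volume.restrict (Metric.ball (c j) (16 * ρ))) ≤
        ENNReal.ofReal (ε * (θ ^ j * M)) := by
      refine (eLpNorm_mono_measure f (Measure.restrict_mono
        (Metric.ball_subset_closedBall.trans hcj.closedBall_subset) le_rfl)).trans (hf.trans ?_)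
      gcongr ENNReal.ofReal (ε * (?_ * M))
      exact pow_le_pow_of_le_one hθ₀.le hθ (by omega)
    have hempty : {y ∈ Metric.ball (c j) ρ | u y < θ ^ j * M} = ∅ :=
      Set.eq_empty_of_forall_notMem fun y hy => hy.2.not_ge (ih (by omega) y hy.1)
    rw [pow_succ', mul_assoc]
    refine hG hu hcj (by positivity) hfj (by rw [hempty, measure_empty]; exact zero_le) x ?_
    exact Metric.ball_subset_ball' (by linarith [hdist j (by omega)]) hx

end GrowthProperty

end InteriorGrowth

section InteriorEstimate

variable {n : ℕ} {lam Lam μ ε θ ρ M p q K ν η : ℝ} {Ω S T : Set (EuclideanSpace ℝ (Fin n))}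
  {b f u : EuclideanSpace ℝ (Fin n) → ℝ} {c x y : EuclideanSpace ℝ (Fin n)} {r : ℝ}

lemma GrowthProperty.pow_mul_le_of_segment (hG : GrowthProperty n lam Lam μ ε θ) (hε : 0 ≤ ε)
    (hθ₀ : 0 < θ) (hθ : θ ≤ 1) (hu : IsSupersolution n lam Lam Ω b f u) (hM : 0 < M) {N : ℕ}
    (hN : N ≠ 0) (hxy : dist x y ≤ 7 * ρ * N)
    (hadm : ∀ z ∈ segment ℝ x y, IsAdmissibleBall n ε Ω b z ρ)
    (hf : eLpNorm f n (volume.restrict Ω) ≤ ENNReal.ofReal (ε * (θ ^ N * M)))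
    (hstart : ∀ z ∈ Metric.ball x ρ, M ≤ u z) : ∀ z ∈ Metric.ball y ρ, θ ^ N * M ≤ u z := by
  have hN' : (0 : ℝ) < N := by exact_mod_cast Nat.pos_of_ne_zero hN
  set c : ℕ → EuclideanSpace ℝ (Fin n) := fun j => AffineMap.lineMap x y ((j : ℝ) / N) with hc
  have hc₀ : c 0 = x := by simp [hc]
  have hcN : c N = y := by simp [hc, hN'.ne']
  have hdist (j : ℕ) : dist (c (j + 1)) (c j) ≤ 7 * ρ := by
    have hstep : ((j + 1 : ℕ) : ℝ) / N - j / N = 1 / N := by push_cast; ring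
    rw [hc, dist_lineMap_lineMap, Real.dist_eq, hstep, abs_of_pos (by positivity),
      one_div_mul_eq_div, div_le_iff₀ hN']
    exact hxy
  rw [← hcN]
  refine hG.pow_mul_le_of_chain hε hθ₀ hθ hu hM (fun j hj => hadm _ ?_) (fun j _ => hdist j) hf
    (by rwa [hc₀])
  rw [segment_eq_image_lineMap]
  exact Set.mem_image_of_mem _
    ⟨by positivity, (div_le_one hN').2 (by exact_mod_cast hj)⟩

lemma eLpNorm_restrict_le_mul_rpow (hn : 0 < n) (hq : n ≤ q) (hr : 0 < r)
    (hSr : S ⊆ Metric.ball c r) (hST : S ⊆ T) {g : EuclideanSpace ℝ (Fin n) → ℝ}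
    (hg : AEStronglyMeasurable g (volume.restrict T)) :
    eLpNorm g n (volume.restrict S) ≤
      eLpNorm g (ENNReal.ofReal q) (volume.restrict T) *
        ENNReal.ofReal ((ballConst n * r) ^ (1 - n / q)) := by
  have hn' : (0 : ℝ) < n := by exact_mod_cast hn
  have hq₀ : 0 < q := hn'.trans_le hq
  have hexp : 0 ≤ 1 / (n : ℝ) - 1 / q := sub_nonneg.2 (one_div_le_one_div_of_le hn' hq)
  have hκ : 0 < ballConst n * r := mul_pos (ballConst_pos n) hr
  have hnq : (n : ℝ≥0∞) ≤ ENNReal.ofReal q := by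
    rw [← ENNReal.ofReal_natCast]
    exact ENNReal.ofReal_le_ofReal hq
  calc eLpNorm g n (volume.restrict S)
      ≤ eLpNorm g (ENNReal.ofReal q) (volume.restrict S) *
          volume.restrict S Set.univ ^ (1 / (n : ℝ) - 1 / q) := by
        simpa only [ENNReal.toReal_natCast, ENNReal.toReal_ofReal hq₀.le] using
          eLpNorm_le_eLpNorm_mul_rpow_measure_univ hnq
            (hg.mono_measure (Measure.restrict_mono hST le_rfl))
    _ ≤ eLpNorm g (ENNReal.ofReal q) (volume.restrict T) *
          volume (Metric.ball c r) ^ (1 / (n : ℝ) - 1 / q) := by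
        rw [Measure.restrict_apply_univ]
        gcongr
    _ = _ := by
        rw [volume_ball_eq_pow hn c hr.le, ← ENNReal.ofReal_pow hκ.le,
          ENNReal.ofReal_rpow_of_nonneg (by positivity) hexp, ← Real.rpow_natCast,
          ← Real.rpow_mul hκ.le, mul_sub, mul_one_div, mul_one_div, div_self hn'.ne']

lemma exists_isAdmissibleBall (hn : 0 < n) (hq : n < q) (hε : 0 < ε) {t : ℝ} (ht : 0 < t)
    (K : ℝ) :
    ∃ ρ > 0, ∀ b : EuclideanSpace ℝ (Fin n) → ℝ,
      AEStronglyMeasurable b (volume.restrict (Metric.ball 0 1)) →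
      eLpNorm b (ENNReal.ofReal q) (volume.restrict (Metric.ball 0 1)) ≤ ENNReal.ofReal K →
      ∀ c, ‖c‖ + t ≤ 1 → IsAdmissibleBall n ε (Metric.ball 0 1) b c ρ := by
  have hq₀ : 0 < q := (Nat.cast_nonneg n).trans_lt hq
  have hexp : 0 < 1 - n / q := sub_pos.2 ((div_lt_one hq₀).2 hq)
  have hlim : Filter.Tendsto (fun ρ : ℝ => K * (ballConst n * (16 * ρ)) ^ (1 - n / q))
      (nhdsWithin 0 (Set.Ioi 0)) (nhds 0) := by
    have hcont : Continuous fun ρ : ℝ => K * (ballConst n * (16 * ρ)) ^ (1 - n / q) :=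
      continuous_const.mul ((by fun_prop : Continuous fun ρ : ℝ =>
        ballConst n * (16 * ρ)).rpow_const fun _ => .inr hexp.le)
    simpa [Real.zero_rpow hexp.ne'] using (hcont.tendsto 0).mono_left nhdsWithin_le_nhds
  have hnhds : ∀ᶠ ρ in nhds (0 : ℝ), ρ < t / 16 ∧ ρ ≤ 1 :=
    (eventually_lt_nhds (by positivity)).and (eventually_le_nhds one_pos)
  have hpos : ∀ᶠ ρ in nhdsWithin 0 (Set.Ioi 0), (0 : ℝ) < ρ := self_mem_nhdsWithin
  obtain ⟨ρ, ⟨hsmall, hρt, hρ₁⟩, hρ⟩ :=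
    (((hlim.eventually_le_const hε).and (hnhds.filter_mono nhdsWithin_le_nhds)).and hpos).exists
  refine ⟨ρ, hρ, fun b hb hbK c hc => ?_⟩
  have hsub : Metric.closedBall c (16 * ρ) ⊆ Metric.ball 0 1 :=
    Metric.closedBall_subset_ball' (by rw [dist_zero_right]; linarith)
  refine ⟨hρ, hρ₁, hsub, ?_⟩
  calc _ ≤ eLpNorm b (ENNReal.ofReal q) (volume.restrict (Metric.ball 0 1)) *
          ENNReal.ofReal ((ballConst n * (16 * ρ)) ^ (1 - n / q)) :=
        eLpNorm_restrict_le_mul_rpow hn hq.le (by positivity) subset_rfl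
          (Metric.ball_subset_closedBall.trans hsub) hb
    _ ≤ ENNReal.ofReal K * ENNReal.ofReal ((ballConst n * (16 * ρ)) ^ (1 - n / q)) := by gcongr
    _ ≤ ENNReal.ofReal ε := by
        have := ballConst_pos n
        rw [← ENNReal.ofReal_mul' (by positivity)]
        exact ENNReal.ofReal_le_ofReal hsmall

lemma exists_measure_le_card_mul_inter {X ι : Type*} [MeasurableSpace X] (m : Measure X)
    {s : Finset ι} (hs : s.Nonempty) {A : Set X} {B : ι → Set X} (hA : A ⊆ ⋃ i ∈ s, B i) :
    ∃ i ∈ s, m A ≤ s.card * m (A ∩ B i) := by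
  obtain ⟨i, hi, hmax⟩ := s.exists_max_image (fun i => m (A ∩ B i)) hs
  refine ⟨i, hi, ?_⟩
  calc m A ≤ m (⋃ i ∈ s, A ∩ B i) := by
        refine measure_mono fun x hx => ?_
        rw [← Set.inter_iUnion₂]
        exact ⟨hx, hA hx⟩
    _ ≤ ∑ i ∈ s, m (A ∩ B i) := measure_biUnion_finset_le _ _
    _ ≤ s.card * m (A ∩ B i) := by
        simpa only [nsmul_eq_mul] using Finset.sum_le_card_nsmul s _ _ hmax

lemma exists_measure_ball_sdiff_ball_le {E : Type*} [NormedAddCommGroup E] [NormedSpace ℝ E]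
    [FiniteDimensional ℝ E] [MeasurableSpace E] [BorelSpace E] (m : Measure E)
    [m.IsAddHaarMeasure] (hν : 0 < ν) (hη : 0 < η) :
    ∃ s, 0 < s ∧ s < 1 ∧ 1 - η ≤ s ∧
      m (Metric.ball 0 1 \ Metric.ball 0 s) ≤ ENNReal.ofReal ν * m (Metric.ball 0 1) := by
  have hlim : Filter.Tendsto (fun s : ℝ => 1 - s ^ Module.finrank ℝ E)
      (nhdsWithin 1 (Set.Iio 1)) (nhds 0) := by
    have hcont : Continuous fun s : ℝ => 1 - s ^ Module.finrank ℝ E := by fun_prop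
    simpa using (hcont.tendsto 1).mono_left nhdsWithin_le_nhds
  have hnhds : ∀ᶠ s in nhds (1 : ℝ), 0 < s ∧ 1 - η ≤ s :=
    (eventually_gt_nhds one_pos).and (eventually_ge_nhds (by linarith))
  have hlt : ∀ᶠ s in nhdsWithin 1 (Set.Iio 1), s < (1 : ℝ) := self_mem_nhdsWithin
  obtain ⟨s, ⟨hsν, hs₀, hsη⟩, hs₁⟩ :=
    (((hlim.eventually_le_const hν).and (hnhds.filter_mono nhdsWithin_le_nhds)).and hlt).exists
  refine ⟨s, hs₀, hs₁, hsη, ?_⟩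
  rw [measure_sdiff (Metric.ball_subset_ball hs₁.le)
    Metric.isOpen_ball.measurableSet.nullMeasurableSet measure_ball_lt_top.ne,
    Measure.addHaar_ball_of_pos m 0 hs₀, tsub_le_iff_right, ← add_mul,
    ← ENNReal.ofReal_add hν.le (by positivity)]
  refine le_mul_of_one_le_left' (ENNReal.one_le_ofReal.2 (by linarith))

lemma exists_finset_closedBall_subset_biUnion_ball {E : Type*} [NormedAddCommGroup E]
    [NormedSpace ℝ E] [FiniteDimensional ℝ E] {s : ℝ} (hs : 0 ≤ s) (hρ : 0 < ρ) :
    ∃ F : Finset E, F.Nonempty ∧ (∀ z ∈ F, ‖z‖ ≤ s) ∧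
      Metric.closedBall 0 s ⊆ ⋃ z ∈ F, Metric.ball z ρ := by
  obtain ⟨t, hts, htfin, hcov⟩ := (isCompact_closedBall (0 : E) s).finite_cover_balls hρ
  lift t to Finset E using htfin
  refine ⟨t, ?_, fun z hz => by simpa using hts hz, by simpa using hcov⟩
  obtain ⟨z, hz, -⟩ := Set.mem_iUnion₂.1 (hcov (Metric.mem_closedBall_self hs))
  exact ⟨z, hz⟩

lemma half_mul_measure_le_measure_inter {X : Type*} [MeasurableSpace X] {m : Measure X}
    {A B C : Set X} (hν : 0 ≤ ν) (hC : m C ≠ ∞) (hA : ENNReal.ofReal ν * m C ≤ m (A ∩ C))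
    (hB : m (C \ B) ≤ ENNReal.ofReal (ν / 2) * m C) :
    ENNReal.ofReal (ν / 2) * m C ≤ m (A ∩ B) := by
  have hsplit : m (A ∩ C) ≤ m (A ∩ B) + m (C \ B) := by
    refine (measure_mono fun x hx => ?_).trans (measure_union_le _ _)
    by_cases hxB : x ∈ B
    · exact .inl ⟨hx.1, hxB⟩
    · exact .inr ⟨hx.2, hxB⟩
  refine (ENNReal.add_le_add_iff_right (a := ENNReal.ofReal (ν / 2) * m C)
    (ENNReal.mul_ne_top ENNReal.ofReal_ne_top hC)).1 ?_
  calc _ = ENNReal.ofReal ν * m C := by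
        rw [← add_mul, ← ENNReal.ofReal_add (by positivity) (by positivity), add_halves]
    _ ≤ _ := hA.trans (hsplit.trans (by gcongr))

lemma exists_mul_measure_ball_le_measure_inter {E : Type*} [NormedAddCommGroup E]
    [MeasurableSpace E] [BorelSpace E] (m : Measure E) [m.IsAddHaarMeasure] {A : Set E}
    {F : Finset E} (hF : F.Nonempty) (hAF : A ⊆ ⋃ z ∈ F, Metric.ball z ρ) (hρ : ρ ≤ 1)
    (hA : ENNReal.ofReal ν * m (Metric.ball 0 1) ≤ m A) :
    ∃ z ∈ F, ENNReal.ofReal (ν / F.card) * m (Metric.ball z ρ) ≤ m (A ∩ Metric.ball z ρ) := by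
  have hcard : (0 : ℝ) < F.card := by exact_mod_cast hF.card_pos
  obtain ⟨z, hz, hle⟩ := exists_measure_le_card_mul_inter m hF hAF
  refine ⟨z, hz, ?_⟩
  rw [ENNReal.ofReal_div_of_pos hcard, ENNReal.ofReal_natCast, ← ENNReal.mul_div_right_comm]
  refine ENNReal.div_le_of_le_mul' ((le_trans ?_ hA).trans hle)
  rw [Measure.addHaar_ball_center]
  gcongr

theorem exists_le_of_mul_volume_le (hn : 0 < n) (hlam : 0 < lam) (hLam : lam ≤ Lam) (hq : n < q)
    (K : ℝ) (hν : 0 < ν) (hη : 0 < η) :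
    ∃ k > 0, ∃ a > 0, ∀ b f u, IsSupersolution n lam Lam (Metric.ball 0 1) b f u →
      eLpNorm b (ENNReal.ofReal q) (volume.restrict (Metric.ball 0 1)) ≤ ENNReal.ofReal K →
      eLpNorm f n (volume.restrict (Metric.ball 0 1)) ≤ ENNReal.ofReal a →
      ENNReal.ofReal ν * volume (Metric.ball (0 : EuclideanSpace ℝ (Fin n)) 1) ≤
        volume {x ∈ Metric.ball 0 1 | 1 - ‖x‖ ≤ u x} →
      ∀ x, ‖x‖ ≤ 1 - η → k ≤ u x := by
  obtain ⟨μ, ε, θ, hμ, hε, hθ₀, hθ₁, hG⟩ := exists_growthProperty hn hlam hLam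
  obtain ⟨s, hs₀, hs₁, hsη, hshell⟩ := exists_measure_ball_sdiff_ball_le
    (volume : Measure (EuclideanSpace ℝ (Fin n))) (half_pos hν) hη
  obtain ⟨ρ, hρ, hadm⟩ := exists_isAdmissibleBall hn hq hε (sub_pos.2 hs₁) K
  obtain ⟨F, hF, hFs, hcov⟩ :=
    exists_finset_closedBall_subset_biUnion_ball (E := EuclideanSpace ℝ (Fin n)) hs₀.le hρ
  have : (0 : ℝ) < F.card := by exact_mod_cast hF.card_pos
  obtain ⟨N, hN⟩ := hG.exists_pow_mul_le hμ hε.le hθ₀ hθ₁.le (by positivity : 0 < ν / 2 / F.card)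
  obtain ⟨J, hJ⟩ := exists_nat_gt (2 / (7 * ρ))
  have ht : 0 < θ ^ N * (1 - s) := mul_pos (by positivity) (sub_pos.2 hs₁)
  refine ⟨θ ^ J * (θ ^ N * (1 - s)), by positivity, ε * (θ ^ J * (θ ^ N * (1 - s))),
    by positivity, fun b f u hu hbK hfa hvol x hx => ?_⟩
  have hadm' (z : EuclideanSpace ℝ (Fin n)) (hz : ‖z‖ ≤ s) :
      IsAdmissibleBall n ε (Metric.ball 0 1) b z ρ :=
    hadm b hu.aestronglyMeasurable_drift hbK z (by linarith)
  obtain ⟨z, hz, hzvol⟩ := exists_mul_measure_ball_le_measure_inter volume hF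
    ((Set.inter_subset_right.trans Metric.ball_subset_closedBall).trans hcov)
    (hadm' 0 (by simpa using hs₀.le)).le_one
    (half_mul_measure_le_measure_inter (A := {x | 1 - ‖x‖ ≤ u x}) hν.le measure_ball_lt_top.ne
      (by rwa [Set.inter_comm]) hshell)
  have hxs : ‖x‖ ≤ s := hx.trans hsη
  have hz' : ‖z‖ ≤ s := hFs z hz
  refine hG.pow_mul_le_of_segment hε.le hθ₀ hθ₁.le hu ht ?_ ?_ (fun y hy => hadm' y ?_) hfa
    (hN hu (hadm' z hz') (sub_pos.2 hs₁) ?_ (hzvol.trans (measure_mono ?_))) x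
    (Metric.mem_ball_self hρ)
  · rintro rfl
    exact hJ.not_ge (by simp only [Nat.cast_zero]; positivity)
  · rw [div_lt_iff₀ (by positivity)] at hJ
    linarith [dist_le_norm_add_norm z x]
  · exact mem_closedBall_zero_iff.1 ((convex_closedBall 0 s).segment_subset
      (mem_closedBall_zero_iff.2 hz') (mem_closedBall_zero_iff.2 hxs) hy)
  · refine (eLpNorm_mono_measure f (Measure.restrict_mono (Metric.ball_subset_closedBall.trans
      (hadm' z hz').closedBall_subset) le_rfl)).trans (hfa.trans (ENNReal.ofReal_le_ofReal ?_))
    exact mul_le_mul_of_nonneg_left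
      (mul_le_of_le_one_left ht.le (pow_le_one₀ hθ₀.le hθ₁.le)) hε.le
  · rintro y ⟨⟨hyu, hys⟩, hyz⟩
    exact ⟨hyz, le_trans (by linarith [mem_ball_zero_iff.1 hys]) hyu⟩

end InteriorEstimate

section HopfBarrier

/-- The profile `m * s + P * s ^ 2`, with `s = 1 - σ`, of the barriers near the unit sphere, as a
function of the squared norm `σ`. -/
def hopfProfile (m P σ : ℝ) : ℝ := m * (1 - σ) + P * (1 - σ) ^ 2

/-- A barrier in the unit ball comparable to the distance to the boundary. The parameter `α` is an
upper bound of the ratio `Lam * n / lam`. -/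
def hopfBarrier {E : Type*} [Norm E] (α : ℝ) (x : E) : ℝ := hopfProfile 1 (2 * α) (‖x‖ ^ 2)

/-- The barrier `m * hopfBarrier α` bent down away from `z` by a paraboloid of opening `a`; a
multiple of `a` in the quadratic part of the profile keeps it a strict subsolution. -/
noncomputable def localizedHopfBarrier {E : Type*} [NormedAddCommGroup E] (α m a : ℝ) (z : E) :
    E → ℝ :=
  (fun x => hopfProfile m (2 * α * (m + a)) (‖x - 0‖ ^ 2)) - fun x => a / 2 * ‖x - z‖ ^ 2

lemma one_sub_le_one_sub_sq {r : ℝ} (hr₀ : 0 ≤ r) (hr₁ : r ≤ 1) : 1 - r ≤ 1 - r ^ 2 := by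
  nlinarith

lemma one_sub_sq_le_two_mul (r : ℝ) : 1 - r ^ 2 ≤ 2 * (1 - r) := by
  nlinarith [sq_nonneg (1 - r)]

lemma hasDerivAt_hopfProfile (m P σ : ℝ) :
    HasDerivAt (hopfProfile m P) (-m - 2 * P * (1 - σ)) σ := by
  have h : HasDerivAt (fun σ : ℝ => 1 - σ) (-1) σ := (hasDerivAt_id σ).const_sub 1
  refine ((h.const_mul m).add ((h.pow 2).const_mul P)).congr_deriv ?_
  push_cast
  ring

lemma hasDerivAt_neg_sub_mul_one_sub (m P σ : ℝ) :
    HasDerivAt (fun σ => -m - 2 * P * (1 - σ)) (2 * P) σ := by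
  have h : HasDerivAt (fun σ : ℝ => 1 - σ) (-1) σ := (hasDerivAt_id σ).const_sub 1
  exact ((h.const_mul (2 * P)).const_sub (-m)).congr_deriv (by ring)

section Norm

variable {E : Type*} [SeminormedAddCommGroup E] {α t : ℝ} {x : E}

lemma le_hopfBarrier (hα : 0 ≤ α) (hx : ‖x‖ ≤ 1) : 1 - ‖x‖ ≤ hopfBarrier α x := by
  have := one_sub_le_one_sub_sq (norm_nonneg x) hx
  have : 0 ≤ 2 * α * (1 - ‖x‖ ^ 2) ^ 2 := by positivity
  rw [hopfBarrier, hopfProfile]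
  linarith

lemma hopfBarrier_le (hα : 0 ≤ α) (hx : ‖x‖ ≤ 1) (hxα : 8 * α * (1 - ‖x‖) ≤ 1) :
    hopfBarrier α x ≤ 4 * (1 - ‖x‖) := by
  have hs₀ := one_sub_le_one_sub_sq (norm_nonneg x) hx
  have hs₁ := one_sub_sq_le_two_mul ‖x‖
  have hαs : 2 * α * (1 - ‖x‖ ^ 2) ≤ 1 := by
    linarith [mul_le_mul_of_nonneg_left hs₁ hα]
  calc hopfBarrier α x = (1 - ‖x‖ ^ 2) + 2 * α * (1 - ‖x‖ ^ 2) * (1 - ‖x‖ ^ 2) := by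
        rw [hopfBarrier, hopfProfile]; ring
    _ ≤ (1 - ‖x‖ ^ 2) + 1 * (1 - ‖x‖ ^ 2) := by gcongr; linarith
    _ ≤ 4 * (1 - ‖x‖) := by linarith

end Norm

section Localized

variable {n : ℕ} {lam Lam α m a t : ℝ} {u : EuclideanSpace ℝ (Fin n) → ℝ}
  {x z : EuclideanSpace ℝ (Fin n)}

lemma localizedHopfBarrier_apply (α m a : ℝ) (z x : EuclideanSpace ℝ (Fin n)) :
    localizedHopfBarrier α m a z x =
      m * hopfBarrier α x + 2 * α * a * (1 - ‖x‖ ^ 2) ^ 2 - a / 2 * ‖x - z‖ ^ 2 := by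
  simp only [localizedHopfBarrier, hopfBarrier, hopfProfile, Pi.sub_apply, sub_zero]
  ring

lemma contDiff_hopfProfile_norm_sub_sq (m P : ℝ) :
    ContDiff ℝ 2 fun x : EuclideanSpace ℝ (Fin n) => hopfProfile m P (‖x - 0‖ ^ 2) := by
  have h : ContDiff ℝ 2 fun x : EuclideanSpace ℝ (Fin n) => 1 - ‖x - 0‖ ^ 2 :=
    contDiff_const.sub ((contDiff_id.sub contDiff_const).norm_sq ℝ)
  exact (contDiff_const.mul h).add (contDiff_const.mul (h.pow 2))

lemma contDiff_localizedHopfBarrier (α m a : ℝ) (z : EuclideanSpace ℝ (Fin n)) :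
    ContDiff ℝ 2 (localizedHopfBarrier α m a z) :=
  (contDiff_hopfProfile_norm_sub_sq _ _).sub (contDiff_paraboloid a z)

lemma hess_paraboloid (a : ℝ) (z x : EuclideanSpace ℝ (Fin n)) :
    hess n (fun y => a / 2 * ‖y - z‖ ^ 2) x = a • 1 := by
  refine (hess_radial (G := fun s => a / 2 * s) (G' := fun _ => a / 2)
    (fun s => by simpa using (hasDerivAt_id s).const_mul (a / 2)) (hasDerivAt_const _ _)).trans ?_
  rw [mul_zero, zero_smul, zero_add, mul_div_cancel₀ a two_ne_zero]

lemma le_trace_mul_hess_hopfProfile {A : Matrix (Fin n) (Fin n) ℝ} {P : ℝ}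
    (hA : IsElliptic lam Lam A) (hlam : 0 ≤ lam) (hα : 1 ≤ α) (hαlam : Lam * n ≤ α * lam)
    (hm : 0 ≤ m) (hP : 0 ≤ P) (hx : ‖x‖ ≤ 1) (hxα : 8 * α * (1 - ‖x‖) ≤ 1) :
    3 * P * lam - 2 * m * (Lam * n) ≤
      (A * hess n (fun y => hopfProfile m P (‖y - 0‖ ^ 2)) x).trace := by
  have hs₀ : 0 ≤ 1 - ‖x‖ ^ 2 := by linarith [one_sub_le_one_sub_sq (norm_nonneg x) hx]
  have hs₁ := one_sub_sq_le_two_mul ‖x‖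
  have hαs : 4 * α * (1 - ‖x‖ ^ 2) ≤ 1 := by
    linarith [mul_le_mul_of_nonneg_left hs₁ (show 0 ≤ 4 * α by positivity)]
  have hhalf : 1 / 2 ≤ ‖x‖ ^ 2 := by linarith [mul_le_mul_of_nonneg_right hα hs₀]
  have hconvex : P * lam / 2 ≤ P * lam * ‖x‖ ^ 2 := by
    linarith [mul_le_mul_of_nonneg_left hhalf (mul_nonneg hP hlam)]
  have hslope : P * (4 * (1 - ‖x‖ ^ 2) * (Lam * n)) ≤ P * lam := by
    gcongr
    calc 4 * (1 - ‖x‖ ^ 2) * (Lam * n) ≤ 4 * (1 - ‖x‖ ^ 2) * (α * lam) := by gcongr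
      _ = 4 * α * (1 - ‖x‖ ^ 2) * lam := by ring
      _ ≤ lam := mul_le_of_le_one_left hlam hαs
  have hradial := le_trace_mul_hess_radial hA (x := x) (c := 0) (hasDerivAt_hopfProfile m P)
    (hasDerivAt_neg_sub_mul_one_sub m P _)
    (by rw [sub_zero]; linarith [mul_nonneg hP hs₀]) (by positivity)
  rw [sub_zero] at hradial
  linarith

lemma le_trace_mul_hess_localizedHopfBarrier {A : Matrix (Fin n) (Fin n) ℝ}
    (hA : IsElliptic lam Lam A) (hlam : 0 ≤ lam) (hLam : 0 ≤ Lam) (hα : 1 ≤ α)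
    (hαlam : Lam * n ≤ α * lam) (hm : 0 ≤ m) (ha : 0 ≤ a) (hx : ‖x‖ ≤ 1)
    (hxα : 8 * α * (1 - ‖x‖) ≤ 1) :
    a * (Lam * n) ≤ (A * hess n (localizedHopfBarrier α m a z) x).trace := by
  have hprofile := le_trace_mul_hess_hopfProfile hA hlam hα hαlam hm
    (show 0 ≤ 2 * α * (m + a) by positivity) hx hxα
  have htr : a * A.trace ≤ a * (Lam * n) := by
    gcongr
    simpa only [Fintype.card_fin] using hA.trace_le
  have hquad : 2 * (m + a) * (Lam * n) ≤ 2 * (m + a) * (α * lam) := by gcongr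
  rw [localizedHopfBarrier, hess_sub (contDiff_hopfProfile_norm_sub_sq _ _).contDiffAt
    (contDiff_paraboloid a z).contDiffAt, hess_paraboloid, Matrix.mul_sub, Matrix.mul_smul,
    Matrix.mul_one, Matrix.trace_sub, Matrix.trace_smul, smul_eq_mul]
  have hmL : 0 ≤ m * (Lam * n) := by positivity
  have haL : 0 ≤ a * (Lam * n) := by positivity
  linarith

lemma norm_fderiv_localizedHopfBarrier_le (hα : 0 ≤ α) (hm : 0 ≤ m) (ha : 0 ≤ a)
    (hx : ‖x‖ ≤ 1) (hxt : 1 - ‖x‖ ≤ t) (htα : 8 * α * t ≤ 1) (hat : 8 * α * a * t ≤ m) :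
    ‖fderiv ℝ (localizedHopfBarrier α m a z) x‖ ≤ 6 * m + a * ‖x - z‖ := by
  have hs₀ := one_sub_le_one_sub_sq (norm_nonneg x) hx
  have hs : 1 - ‖x‖ ^ 2 ≤ 2 * t := by linarith [one_sub_sq_le_two_mul ‖x‖]
  have hslope : 0 ≤ 2 * (2 * α * (m + a)) * (1 - ‖x‖ ^ 2) :=
    mul_nonneg (by positivity) (by linarith)
  have hslope' : 2 * (2 * α * (m + a)) * (1 - ‖x‖ ^ 2) ≤ 2 * m :=
    calc _ ≤ 2 * (2 * α * (m + a)) * (2 * t) := by gcongr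
      _ = (8 * α * t) * m + 8 * α * a * t := by ring
      _ ≤ 1 * m + m := by gcongr
      _ = 2 * m := by ring
  have hprofile : ‖fderiv ℝ (fun y => hopfProfile m (2 * α * (m + a)) (‖y - 0‖ ^ 2)) x‖ ≤
      6 * m := by
    rw [norm_fderiv_radial (hasDerivAt_hopfProfile _ _ _), sub_zero, abs_of_nonpos (by linarith)]
    calc _ ≤ 2 * (3 * m) * 1 := by gcongr; linarith
      _ = 6 * m := by ring
  have hparaboloid : ‖fderiv ℝ (fun y => a / 2 * ‖y - z‖ ^ 2) x‖ = a * ‖x - z‖ := by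
    rw [fderiv_paraboloid, norm_smul, innerSL_apply_norm, Real.norm_of_nonneg ha]
  rw [localizedHopfBarrier, fderiv_sub
    ((contDiff_hopfProfile_norm_sub_sq _ _).differentiable (by norm_num) x)
    ((contDiff_paraboloid a z).differentiable (by norm_num) x)]
  exact (norm_sub_le _ _).trans (add_le_add hprofile hparaboloid.le)

lemma sub_localizedHopfBarrier_add_lt (hα : 1 ≤ α) (ha : 0 < a) (ht : 0 < t) (hx : ‖x‖ ≤ 1)
    (hxt : 1 - ‖x‖ ≤ t) (hz : 28 * α * a * t ^ 2 < m * hopfBarrier α z - u z)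
    (hxz : m * hopfBarrier α x - u x ≤ a / 2 * ‖x - z‖ ^ 2 + 4 * α * a * t ^ 2) :
    (u - localizedHopfBarrier α m a z) z + a / 2 * t ^ 2 <
      (u - localizedHopfBarrier α m a z) x := by
  have hs : (1 - ‖x‖ ^ 2) ^ 2 ≤ (2 * t) ^ 2 :=
    pow_le_pow_left₀ (by linarith [one_sub_le_one_sub_sq (norm_nonneg x) hx])
      (by linarith [one_sub_sq_le_two_mul ‖x‖]) 2
  have hx' : 2 * α * a * (1 - ‖x‖ ^ 2) ^ 2 ≤ 2 * α * a * (2 * t) ^ 2 := by gcongr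
  have hz' : 0 ≤ 2 * α * a * (1 - ‖z‖ ^ 2) ^ 2 := by positivity
  have hat : 0 < a * t ^ 2 := by positivity
  have hαat : a * t ^ 2 ≤ α * (a * t ^ 2) := le_mul_of_one_le_left hat.le hα
  simp only [Pi.sub_apply, localizedHopfBarrier_apply, sub_self, norm_zero]
  linarith

end Localized

end HopfBarrier

section BoundaryLayer

variable {n : ℕ} {lam Lam α m a q K t τ R ρ : ℝ} {b f u : EuclideanSpace ℝ (Fin n) → ℝ}
  {x z : EuclideanSpace ℝ (Fin n)}

/-- The constant in the boundary layer estimate `IsSupersolution.mul_hopfBarrier_sub_le`. -/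
noncomputable def hopfConst (n : ℕ) (lam α q K : ℝ) : ℝ :=
  32 * α / (lam * n * ballConst n) *
    ((1 + 9 * |K|) * (ballConst n * (8 * √α)) ^ (1 - n / q))

lemma hopfConst_pos (hn : 0 < n) (hlam : 0 < lam) (hα : 0 < α) : 0 < hopfConst n lam α q K := by
  have : (0 : ℝ) < n := by exact_mod_cast hn
  have := ballConst_pos n
  rw [hopfConst]
  positivity

lemma exists_forall_le_and_mul_lt {X : Type*} {w : X → ℝ} {D : Set X} {B k : ℝ} {x : X}
    (hB : ∀ y ∈ D, w y ≤ B) (hx : x ∈ D) (hwx : 0 < w x) (hk : k < 1) :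
    ∃ S, w x ≤ S ∧ S ≤ B ∧ (∀ y ∈ D, w y ≤ S) ∧ ∃ z ∈ D, k * S < w z := by
  have hne : (w '' D).Nonempty := ⟨w x, x, hx, rfl⟩
  have hbdd : BddAbove (w '' D) := ⟨B, Set.forall_mem_image.2 hB⟩
  have hle (y) (hy : y ∈ D) : w y ≤ sSup (w '' D) := le_csSup hbdd ⟨y, hy, rfl⟩
  obtain ⟨-, ⟨z, hz, rfl⟩, hlt⟩ := exists_lt_of_lt_csSup hne
    (mul_lt_of_lt_one_left (hwx.trans_le (hle x hx)) hk)
  exact ⟨_, hle x hx, csSup_le hne (Set.forall_mem_image.2 hB), hle, z, hz, hlt⟩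

lemma norm_fderiv_le_of_mem_contactSet_localizedHopfBarrier {U : Set (EuclideanSpace ℝ (Fin n))}
    (hα : 1 ≤ α) (hm : 0 ≤ m) (ha : 0 ≤ a) (ht : 0 ≤ t) (htα : 8 * α * t ≤ 1)
    (hat : 8 * α * a * t ≤ m) (hu : DifferentiableAt ℝ u x) (hx₁ : ‖x‖ ≤ 1) (hxt : 1 - ‖x‖ ≤ t)
    (hxz : ‖x - z‖ ≤ 8 * √α * t)
    (hx : x ∈ contactSet (u - localizedHopfBarrier α m a z) U z a t) :
    ‖fderiv ℝ u x‖ ≤ 9 * m := by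
  have hΦ : DifferentiableAt ℝ (localizedHopfBarrier α m a z) x :=
    (contDiff_localizedHopfBarrier α m a z).differentiable (by norm_num) x
  have hsub := hx.2.2.1
  rw [fderiv_sub hu hΦ] at hsub
  have hbarrier := norm_fderiv_localizedHopfBarrier_le (z := z) (zero_le_one.trans hα) hm ha hx₁
    hxt htα hat
  have hatm : a * t ≤ m / 8 := by
    linarith [mul_le_mul_of_nonneg_right hα (mul_nonneg ha ht)]
  have haxz : a * ‖x - z‖ ≤ m :=
    calc a * ‖x - z‖ ≤ a * (8 * α * t) := by
          gcongr
          exact hxz.trans (by gcongr; exact Real.sqrt_le_self_iff.2 (.inr hα))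
      _ = 8 * α * a * t := by ring
      _ ≤ m := hat
  linarith [norm_le_norm_sub_add (fderiv ℝ u x) (fderiv ℝ (localizedHopfBarrier α m a z) x)]

namespace IsSupersolution

lemma le_of_mem_sdiff (hu : IsSupersolution n lam Lam (Metric.ball 0 1) b f u) (hα : 0 ≤ α)
    (hm : 0 ≤ m) (ha : 0 ≤ a) (htα : 8 * α * t ≤ 1) (hτ : 0 < τ)
    (hτa : m * τ ≤ α * a * t ^ 2)
    (hbd : ∀ y, 1 - ‖y‖ = t → m * hopfBarrier α y ≤ u y)
    (hsup : ∀ y ∈ Metric.ball 0 1, 1 - ‖y‖ < t →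
      m * hopfBarrier α y - u y ≤ 32 * α * a * t ^ 2)
    (hx : x ∈ Metric.closedBall z (8 * √α * t) ∩ {x | τ ≤ 1 - ‖x‖ ∧ 1 - ‖x‖ ≤ t})
    (hxU : x ∉ Metric.ball z (8 * √α * t) ∩ {x | τ < 1 - ‖x‖ ∧ 1 - ‖x‖ < t}) :
    m * hopfBarrier α x - u x ≤ a / 2 * ‖x - z‖ ^ 2 + 4 * α * a * t ^ 2 := by
  obtain ⟨hxz, hτx, hxt⟩ := hx
  have hx₁ : x ∈ Metric.ball 0 1 := mem_ball_zero_iff.2 (by linarith)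
  have hxz₀ : 0 ≤ a / 2 * ‖x - z‖ ^ 2 := by positivity
  have hα₀ : 0 ≤ 4 * α * a * t ^ 2 := by positivity
  rcases hxt.lt_or_eq with hxt' | hxt'
  · rcases hτx.lt_or_eq with hτx' | hτx'
    · have hr : ‖x - z‖ = 8 * √α * t := by
        rw [mem_closedBall_iff_norm] at hxz
        exact hxz.antisymm (not_lt.1 fun h => hxU ⟨mem_ball_iff_norm.2 h, hτx', hxt'⟩)
      have hra : a / 2 * (8 * √α * t) ^ 2 = 32 * α * a * t ^ 2 := by
        rw [mul_pow, mul_pow, Real.sq_sqrt hα]; ring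
      rw [hr, hra]
      linarith [hsup x hx₁ hxt']
    · have hxα : 8 * α * (1 - ‖x‖) ≤ 1 := le_trans (by gcongr) htα
      have hle := mul_le_mul_of_nonneg_left (hopfBarrier_le hα (by linarith) hxα) hm
      rw [← hτx'] at hle
      linarith [hu.nonneg x hx₁]
  · linarith [hbd x hxt']

lemma abp_boundaryLayer (hu : IsSupersolution n lam Lam (Metric.ball 0 1) b f u) (hn : 0 < n)
    (hlam : 0 < lam) (hLam : lam ≤ Lam) (hα : 1 ≤ α) (hαlam : Lam * n ≤ α * lam) (hm : 0 < m)
    (ha : 0 < a) (ht : 0 < t) (htα : 8 * α * t ≤ 1) (hat : 8 * α * a * t ≤ m)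
    (hbd : ∀ y, 1 - ‖y‖ = t → m * hopfBarrier α y ≤ u y)
    (hsup : ∀ y ∈ Metric.ball 0 1, 1 - ‖y‖ < t →
      m * hopfBarrier α y - u y ≤ 32 * α * a * t ^ 2)
    (hz₁ : z ∈ Metric.ball 0 1) (hzt : 1 - ‖z‖ < t)
    (hz : 28 * α * a * t ^ 2 < m * hopfBarrier α z - u z) :
    ENNReal.ofReal (ballConst n * t) ≤ ENNReal.ofReal (1 / (a * (lam * n))) *
      (eLpNorm f n (volume.restrict
        (Metric.ball z (8 * √α * t) ∩ {x ∈ Metric.ball 0 1 | 1 - ‖x‖ < t})) +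
      ENNReal.ofReal (9 * m) * eLpNorm b n (volume.restrict
        (Metric.ball z (8 * √α * t) ∩ {x ∈ Metric.ball 0 1 | 1 - ‖x‖ < t}))) := by
  have hα₀ : 0 < α := one_pos.trans_le hα
  set r := 8 * √α * t
  have hr₀ : 0 < r := by positivity
  obtain ⟨τ, hτ, hτlt⟩ : ∃ τ, 0 < τ ∧ τ < min (α * a * t ^ 2 / m) (1 - ‖z‖) :=
    exists_between (lt_min (by positivity) (by linarith [mem_ball_zero_iff.1 hz₁]))
  obtain ⟨hτa, hτz⟩ := lt_min_iff.1 hτlt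
  rw [lt_div_iff₀' hm] at hτa
  have hdist : Continuous fun x : EuclideanSpace ℝ (Fin n) => 1 - ‖x‖ := by fun_prop
  have hK : IsCompact (Metric.closedBall z r ∩ {x | τ ≤ 1 - ‖x‖ ∧ 1 - ‖x‖ ≤ t}) :=
    (isCompact_closedBall z r).inter_right
      ((isClosed_le continuous_const hdist).inter (isClosed_le hdist continuous_const))
  have hU : IsOpen (Metric.ball z r ∩ {x | τ < 1 - ‖x‖ ∧ 1 - ‖x‖ < t}) :=
    Metric.isOpen_ball.inter
      ((isOpen_lt continuous_const hdist).inter (isOpen_lt hdist continuous_const))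
  have hΦ := contDiff_localizedHopfBarrier α m a z
  refine (hu.abp (A := Metric.ball z r ∩ {x ∈ Metric.ball 0 1 | 1 - ‖x‖ < t}) (S := ∅) (L := 0)
    (G := 9 * m) hn hlam hLam hK (fun x hx => mem_ball_zero_iff.2 (by linarith [hx.2.1])) hU
    (fun x hx => ⟨Metric.ball_subset_closedBall hx.1, hx.2.1.le, hx.2.2.le⟩) hΦ.contDiffOn
    hΦ.continuous.continuousOn ⟨Metric.mem_ball_self hr₀, hτz, hzt⟩ ha ht.le
    (fun x hx hxU => sub_localizedHopfBarrier_add_lt hα ha ht (by linarith [hx.2.1]) hx.2.2 hz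
      (hu.le_of_mem_sdiff hα₀.le hm.le ha.le htα hτ hτa.le hbd hsup hx hxU))
    (fun x hx => ⟨hx.1, mem_ball_zero_iff.2 (by linarith [hx.2.1]), hx.2.2⟩)
    (fun x hx => hx.2.1) MeasurableSet.empty (by positivity) le_rfl
    (fun x hx => ?_) (fun x hx A hA => ?_)).trans_eq (by simp)
  all_goals obtain ⟨hxz, hτx, hxt⟩ := hx.1
  all_goals have hx₁ : ‖x‖ ≤ 1 := by linarith
  · exact norm_fderiv_le_of_mem_contactSet_localizedHopfBarrier hα hm.le ha.le ht.le htα hat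
      (hu.contDiffOn.contDiffAt (Metric.isOpen_ball.mem_nhds
        (mem_ball_zero_iff.2 (by linarith))) |>.differentiableAt (by norm_num)) hx₁ hxt.le
      (mem_ball_iff_norm.1 hxz).le hx
  · simpa only [Set.indicator_empty, sub_zero, mul_one] using
      le_trace_mul_hess_localizedHopfBarrier hA hlam.le (hlam.le.trans hLam) hα hαlam hm.le ha.le
        hx₁ (le_trans (by gcongr) htα)

lemma mul_sq_le_hopfConst_mul (hu : IsSupersolution n lam Lam (Metric.ball 0 1) b f u) (hn : 0 < n)
    (hlam : 0 < lam) (hLam : lam ≤ Lam) (hα : 1 ≤ α) (hαlam : Lam * n ≤ α * lam) (hq : n < q)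
    (hb : eLpNorm b (ENNReal.ofReal q) (volume.restrict (Metric.ball 0 1)) ≤ ENNReal.ofReal K)
    (hm : 0 < m) (ha : 0 < a) (ht : 0 < t) (htα : 8 * α * t ≤ 1) (hat : 8 * α * a * t ≤ m)
    (hf : eLpNorm f (ENNReal.ofReal q)
      (volume.restrict {x ∈ Metric.ball 0 1 | 1 - ‖x‖ < t}) ≤ ENNReal.ofReal m)
    (hbd : ∀ y, 1 - ‖y‖ = t → m * hopfBarrier α y ≤ u y)
    (hsup : ∀ y ∈ Metric.ball 0 1, 1 - ‖y‖ < t →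
      m * hopfBarrier α y - u y ≤ 32 * α * a * t ^ 2)
    (hz₁ : z ∈ Metric.ball 0 1) (hzt : 1 - ‖z‖ < t)
    (hz : 28 * α * a * t ^ 2 < m * hopfBarrier α z - u z) :
    32 * α * a * t ^ 2 ≤ hopfConst n lam α q K * (t * t ^ (1 - n / q)) * m := by
  have : (0 : ℝ) < n := by exact_mod_cast hn
  have : 0 < α := one_pos.trans_le hα
  have hκ := ballConst_pos n
  have hr : 0 < 8 * √α * t := by positivity
  have hlayer : {x : EuclideanSpace ℝ (Fin n) | x ∈ Metric.ball 0 1 ∧ 1 - ‖x‖ < t} ⊆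
    Metric.ball 0 1 := fun _ hx => hx.1
  have hfn := eLpNorm_restrict_le_mul_rpow hn hq.le hr Set.inter_subset_left Set.inter_subset_right
    (hu.aestronglyMeasurable_source.mono_measure (Measure.restrict_mono hlayer le_rfl)) (c := z)
  have hbn := eLpNorm_restrict_le_mul_rpow hn hq.le hr Set.inter_subset_left
    (Set.inter_subset_right.trans hlayer) hu.aestronglyMeasurable_drift (c := z)
  set X := (ballConst n * (8 * √α * t)) ^ (1 - n / q) with hX
  have : 0 ≤ X := by positivity
  have habp : ballConst n * t ≤ 1 / (a * (lam * n)) * (m * X + 9 * m * (|K| * X)) := by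
    rw [← ENNReal.ofReal_le_ofReal_iff (by positivity)]
    refine (hu.abp_boundaryLayer hn hlam hLam hα hαlam hm ha ht htα hat hbd hsup hz₁ hzt
      hz).trans ?_
    rw [ENNReal.ofReal_mul (by positivity : 0 ≤ 1 / (a * (lam * n))),
      ENNReal.ofReal_add (by positivity) (by positivity),
      ENNReal.ofReal_mul hm.le,
      ENNReal.ofReal_mul (by positivity : 0 ≤ 9 * m), ENNReal.ofReal_mul (abs_nonneg K)]
    gcongr
    · exact hfn.trans (by gcongr)
    · exact hbn.trans (by gcongr; exact hb.trans (ENNReal.ofReal_le_ofReal (le_abs_self K)))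
  have hXt : X = (ballConst n * (8 * √α)) ^ (1 - n / q) * t ^ (1 - n / q) := by
    rw [hX, ← Real.mul_rpow (by positivity) ht.le, mul_assoc (ballConst n)]
  calc 32 * α * a * t ^ 2 = 32 * α / ballConst n * a * t * (ballConst n * t) := by field_simp
    _ ≤ 32 * α / ballConst n * a * t * (1 / (a * (lam * n)) * (m * X + 9 * m * (|K| * X))) := by
      gcongr
    _ = hopfConst n lam α q K * (t * t ^ (1 - n / q)) * m := by
      rw [hXt, hopfConst]; field_simp

lemma mul_hopfBarrier_sub_le (hu : IsSupersolution n lam Lam (Metric.ball 0 1) b f u) (hn : 0 < n)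
    (hlam : 0 < lam) (hLam : lam ≤ Lam) (hα : 1 ≤ α) (hαlam : Lam * n ≤ α * lam) (hq : n < q)
    (hb : eLpNorm b (ENNReal.ofReal q) (volume.restrict (Metric.ball 0 1)) ≤ ENNReal.ofReal K)
    (hm : 0 < m) (ht : 0 < t) (htα : 8 * α * t ≤ 1)
    (hf : eLpNorm f (ENNReal.ofReal q)
      (volume.restrict {x ∈ Metric.ball 0 1 | 1 - ‖x‖ < t}) ≤ ENNReal.ofReal m)
    (hbd : ∀ y, 1 - ‖y‖ = t → m * hopfBarrier α y ≤ u y)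
    (hx₁ : x ∈ Metric.ball 0 1) (hxt : 1 - ‖x‖ < t) :
    m * hopfBarrier α x - hopfConst n lam α q K * (t * t ^ (1 - n / q)) * m ≤ u x := by
  have hα₀ : 0 < α := one_pos.trans_le hα
  by_contra! hlt
  have hB (y) (hy : y ∈ {y : EuclideanSpace ℝ (Fin n) | y ∈ Metric.ball 0 1 ∧ 1 - ‖y‖ < t}) :
      m * hopfBarrier α y - u y ≤ 4 * t * m := by
    have hy₁ := (mem_ball_zero_iff.1 hy.1).le
    have hle := hopfBarrier_le hα₀.le hy₁ (le_trans (by gcongr; exact hy.2.le) htα)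
    linarith [hu.nonneg y hy.1, mul_le_mul_of_nonneg_left (hle.trans (by linarith [hy.2] :
      _ ≤ 4 * t)) hm.le]
  have hC : 0 < hopfConst n lam α q K * (t * t ^ (1 - n / q)) * m := by
    have := hopfConst_pos hn hlam hα₀ (q := q) (K := K)
    positivity
  obtain ⟨S, hxS, hSB, hsup, z, ⟨hz₁, hzt⟩, hz⟩ := exists_forall_le_and_mul_lt hB ⟨hx₁, hxt⟩
    (by linarith) (by norm_num : (7 / 8 : ℝ) < 1)
  have hS : 32 * α * (S / (32 * α * t ^ 2)) * t ^ 2 = S := by field_simp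
  have hSt : 8 * α * (S / (32 * α * t ^ 2)) * t ≤ m := by
    rw [show 8 * α * (S / (32 * α * t ^ 2)) * t = S / (4 * t) by field_simp; ring]
    exact (div_le_iff₀' (by positivity)).2 hSB
  have hle := hu.mul_sq_le_hopfConst_mul hn hlam hLam hα hαlam hq hb hm
    (div_pos (by linarith) (by positivity)) ht htα hSt hf hbd
    (fun y hy hyt => (hsup y ⟨hy, hyt⟩).trans_eq hS.symm) hz₁ hzt (by linarith)
  linarith

lemma mul_one_add_mul_hopfBarrier_le (hu : IsSupersolution n lam Lam (Metric.ball 0 1) b f u)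
    (hn : 0 < n) (hlam : 0 < lam) (hLam : lam ≤ Lam) (hα : 1 ≤ α) (hαlam : Lam * n ≤ α * lam)
    (hq : n < q)
    (hb : eLpNorm b (ENNReal.ofReal q) (volume.restrict (Metric.ball 0 1)) ≤ ENNReal.ofReal K)
    (hm : 0 < m) (ht : 0 < t) (htα : 8 * α * t ≤ 1) (hR₀ : 0 ≤ R) (hR₁ : R ≤ 1)
    (htC : 4 * hopfConst n lam α q K * t ^ (1 - n / q) ≤ (1 - ρ) * R)
    (hf : eLpNorm f (ENNReal.ofReal q)
      (volume.restrict {x ∈ Metric.ball 0 1 | 1 - ‖x‖ < t}) ≤ ENNReal.ofReal (m / 2))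
    (hbd : ∀ y, 1 - ‖y‖ = t → m / 2 * (1 + R) * hopfBarrier α y ≤ u y)
    (htx : t / 2 ≤ 1 - ‖x‖) (hxt : 1 - ‖x‖ < t) :
    m / 2 * (1 + ρ * R) * hopfBarrier α x ≤ u x := by
  have hC := hopfConst_pos (q := q) (K := K) hn hlam (one_pos.trans_le hα)
  have hφ : t ≤ 2 * hopfBarrier α x := by
    linarith [le_hopfBarrier (x := x) (zero_le_one.trans hα) (by linarith)]
  have hφ₀ : 0 ≤ hopfBarrier α x := by linarith
  have hlayer := hu.mul_hopfBarrier_sub_le hn hlam hLam hα hαlam hq hb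
    (by positivity : 0 < m / 2 * (1 + R)) ht htα
    (hf.trans (ENNReal.ofReal_le_ofReal (le_mul_of_one_le_right (by positivity) (by linarith))))
    hbd (mem_ball_zero_iff.2 (by linarith)) hxt
  have herr : hopfConst n lam α q K * (t * t ^ (1 - n / q)) * (m / 2 * (1 + R)) ≤
      m / 2 * ((1 - ρ) * R) * hopfBarrier α x :=
    calc _ ≤ hopfConst n lam α q K * (2 * hopfBarrier α x * t ^ (1 - n / q)) * (m / 2 * 2) := by
          gcongr
          linarith
      _ = m / 2 * (4 * hopfConst n lam α q K * t ^ (1 - n / q)) * hopfBarrier α x := by ring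
      _ ≤ m / 2 * ((1 - ρ) * R) * hopfBarrier α x := by gcongr
  linarith

lemma mul_hopfBarrier_le_of_mul_pow_le (hu : IsSupersolution n lam Lam (Metric.ball 0 1) b f u)
    (hn : 0 < n) (hlam : 0 < lam) (hLam : lam ≤ Lam) (hα : 1 ≤ α) (hαlam : Lam * n ≤ α * lam)
    (hq : n < q)
    (hb : eLpNorm b (ENNReal.ofReal q) (volume.restrict (Metric.ball 0 1)) ≤ ENNReal.ofReal K)
    (hm : 0 < m) (ht : 0 < t) (htα : 8 * α * t ≤ 1)
    (htC : 4 * hopfConst n lam α q K * t ^ (1 - n / q) ≤ 1 - (1 / 2) ^ (1 - n / q))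
    (hf : eLpNorm f (ENNReal.ofReal q)
      (volume.restrict {x ∈ Metric.ball 0 1 | 1 - ‖x‖ < t}) ≤ ENNReal.ofReal (m / 2))
    (hbd : ∀ y, 1 - ‖y‖ = t → m * hopfBarrier α y ≤ u y) (j : ℕ)
    (hjx : t * (1 / 2) ^ j ≤ 1 - ‖x‖) (hxt : 1 - ‖x‖ ≤ t) :
    m / 2 * (1 + ((1 / 2) ^ (1 - n / q)) ^ j) * hopfBarrier α x ≤ u x := by
  have hC := hopfConst_pos (q := q) (K := K) hn hlam (one_pos.trans_le hα)
  set ρ : ℝ := (1 / 2) ^ (1 - n / q) with hρ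
  have hρ₀ : 0 < ρ := by positivity
  have hρ₁ : ρ ≤ 1 := by
    linarith [show 0 ≤ 4 * hopfConst n lam α q K * t ^ (1 - n / q) by positivity]
  induction j generalizing x with
  | zero =>
    rw [pow_zero, mul_one] at hjx
    linarith [hbd x (hxt.antisymm hjx)]
  | succ j ih =>
    have htj : t * (1 / 2) ^ j ≤ t :=
      mul_le_of_le_one_right ht.le (pow_le_one₀ (by norm_num) (by norm_num))
    rcases le_or_gt (t * (1 / 2) ^ j) (1 - ‖x‖) with hj | hj
    · have hφ : 1 - ‖x‖ ≤ hopfBarrier α x := le_hopfBarrier (zero_le_one.trans hα)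
        (by linarith [show 0 ≤ t * (1 / 2) ^ j by positivity])
      refine le_trans (mul_le_mul_of_nonneg_right ?_ (hφ.trans' (hj.trans' (by positivity))))
        (ih hj hxt)
      gcongr m / 2 * (1 + ?_)
      exact pow_le_pow_of_le_one hρ₀.le hρ₁ j.le_succ
    · have hpow : (t * (1 / 2) ^ j) ^ (1 - n / q) = t ^ (1 - n / q) * ρ ^ j := by
        rw [Real.mul_rpow ht.le (by positivity), hρ, ← Real.rpow_pow_comm (by norm_num)]
      rw [pow_succ' ρ]
      refine hu.mul_one_add_mul_hopfBarrier_le hn hlam hLam hα hαlam hq hb hm (by positivity)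
        (htα.trans' (by gcongr)) (by positivity) (pow_le_one₀ hρ₀.le hρ₁) ?_
        (hf.trans' (eLpNorm_mono_measure f (Measure.restrict_mono_set _
          fun y hy => ⟨hy.1, hy.2.trans_le htj⟩)))
        (fun y hy => ih hy.ge (hy.le.trans htj)) (hjx.trans' (by rw [pow_succ]; linarith)) hj
      rw [hpow, ← mul_assoc]
      gcongr

end IsSupersolution

theorem exists_mul_lt_of_le_on_sphere (hn : 0 < n) (hlam : 0 < lam) (hLam : lam ≤ Lam)
    (hq : n < q) (K : ℝ) {d : ℝ} (hd : 0 < d) :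
    ∃ t > 0, ∀ b f u m, IsSupersolution n lam Lam (Metric.ball 0 1) b f u → 0 < m →
      eLpNorm b (ENNReal.ofReal q) (volume.restrict (Metric.ball 0 1)) ≤ ENNReal.ofReal K →
      eLpNorm f (ENNReal.ofReal q) (volume.restrict {x ∈ Metric.ball 0 1 | 1 - ‖x‖ < d}) ≤
        ENNReal.ofReal (m / 2) →
      (∀ x, 1 - ‖x‖ = t → m ≤ u x) →
      ∀ x ∈ Metric.ball 0 1, 1 - ‖x‖ ≤ t → m / 2 * (1 - ‖x‖) < u x := by
  have hn' : (0 : ℝ) < n := by exact_mod_cast hn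
  obtain ⟨α, hα, hαlam⟩ : ∃ α, 1 ≤ α ∧ Lam * n ≤ α * lam :=
    ⟨Lam * n / lam, (one_le_div hlam).2 (hLam.trans (le_mul_of_one_le_right
      (hlam.le.trans hLam) (by exact_mod_cast hn))), (div_mul_cancel₀ _ hlam.ne').ge⟩
  have hβ : 0 < 1 - n / q := sub_pos.2 ((div_lt_one (hn'.trans hq)).2 hq)
  have hC₀ : Filter.Tendsto (fun t : ℝ => 4 * hopfConst n lam α q K * t ^ (1 - n / q))
      (nhds 0) (nhds 0) := by
    have h := (Real.continuous_rpow_const hβ.le).const_mul (4 * hopfConst n lam α q K)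
    simpa only [Real.zero_rpow hβ.ne', mul_zero] using h.tendsto 0
  have hα₀ : Filter.Tendsto (fun t : ℝ => 8 * α * t) (nhds 0) (nhds 0) := by
    simpa using (continuous_const_mul (8 * α)).tendsto 0
  have hsmall : ∀ᶠ t : ℝ in nhds 0, 8 * α * t ≤ 1 ∧ t < d ∧
      4 * hopfConst n lam α q K * t ^ (1 - n / q) ≤ 1 - (1 / 2) ^ (1 - n / q) :=
    (hα₀.eventually_le_const one_pos).and ((eventually_lt_nhds hd).and
      (hC₀.eventually_le_const (sub_pos.2 (Real.rpow_lt_one (by norm_num) (by norm_num) hβ))))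
  have hpos : ∀ᶠ t : ℝ in nhdsWithin 0 (Set.Ioi 0), 0 < t := self_mem_nhdsWithin
  obtain ⟨t, ht, htα, htd, htC⟩ := (hpos.and (hsmall.filter_mono nhdsWithin_le_nhds)).exists
  have ht8 : t ≤ 1 / 8 := by linarith [mul_le_mul_of_nonneg_right hα ht.le]
  refine ⟨t, ht, fun b f u m hu hm hb hf hbd x hx hxt => ?_⟩
  rw [mem_ball_zero_iff, ← sub_pos] at hx
  obtain ⟨j, hj⟩ := exists_pow_lt_of_lt_one (div_pos hx ht) (by norm_num : (1 / 2 : ℝ) < 1)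
  have hφ := le_hopfBarrier (x := x) (zero_le_one.trans hα) (by linarith)
  have hiter := hu.mul_hopfBarrier_le_of_mul_pow_le hn hlam hLam hα hαlam hq hb hm ht htα htC
    (hf.trans' (eLpNorm_mono_measure f (Measure.restrict_mono_set _
      fun y hy => ⟨hy.1, hy.2.trans htd⟩)))
    (fun y hy => le_trans (mul_le_of_le_one_right hm.le (by
      linarith [hopfBarrier_le (x := y) (zero_le_one.trans hα) (by linarith)
        (hy ▸ htα)])) (hbd y hy)) j ((lt_div_iff₀' ht).1 hj).le hxt
  refine lt_of_lt_of_le ?_ hiter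
  calc m / 2 * (1 - ‖x‖) < m / 2 * (1 + ((1 / 2) ^ (1 - n / q)) ^ j) * (1 - ‖x‖) := by
        gcongr
        exact lt_mul_of_one_lt_right (by positivity) (lt_add_of_pos_right _ (by positivity))
    _ ≤ _ := by gcongr

end BoundaryLayer

theorem growth_lemma_unit_ball_general {n : ℕ} (hn : 0 < n) {lam Lam : ℝ} (hlam : 0 < lam)
    (hLam : lam ≤ Lam) {p q d0 ν : ℝ} (hq : n < q) (hp : n ≤ p) (hd0 : 0 < d0) (hν : 0 < ν)
    (K : ℝ) :
    ∃ k > 0, ∃ a > 0, ∀ b f u, IsSupersolution n lam Lam (Metric.ball 0 1) b f u →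
      LpNormE n q b (Metric.ball 0 1) ≤ ENNReal.ofReal K →
      LpNormE n p f (Metric.ball 0 1) + LpNormE n q f {x ∈ Metric.ball 0 1 | 1 - ‖x‖ < d0} ≤
        ENNReal.ofReal a →
      ENNReal.ofReal ν * volume (Metric.ball (0 : EuclideanSpace ℝ (Fin n)) 1) ≤
        volume {x ∈ Metric.ball (0 : EuclideanSpace ℝ (Fin n)) 1 | 1 - ‖x‖ ≤ u x} →
      ∀ x ∈ Metric.ball 0 1, k * (1 - ‖x‖) < u x := by
  have hn' : (0 : ℝ) < n := by exact_mod_cast hn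
  obtain ⟨t, ht, hboundary⟩ := exists_mul_lt_of_le_on_sphere hn hlam hLam hq K hd0
  obtain ⟨m, hm, a, ha, hinterior⟩ := exists_le_of_mul_volume_le hn hlam hLam hq K hν ht
  set X := (ballConst n * 1) ^ (1 - n / p)
  have hX₀ : 0 < X := by have := ballConst_pos n; positivity
  refine ⟨m / 2, by positivity, min (a / X) (m / 2), by positivity,
    fun b f u hu hb hf hvol x hx => ?_⟩
  rw [LpNormE_eq_eLpNorm (hn'.trans hq)] at hb
  rw [LpNormE_eq_eLpNorm (hn'.trans hq), LpNormE_eq_eLpNorm (hn'.trans_le hp)] at hf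
  have hfn : eLpNorm f n (volume.restrict (Metric.ball 0 1)) ≤ ENNReal.ofReal a :=
    calc _ ≤ eLpNorm f (ENNReal.ofReal p) (volume.restrict (Metric.ball 0 1)) *
            ENNReal.ofReal X :=
          eLpNorm_restrict_le_mul_rpow hn hp one_pos subset_rfl subset_rfl
            hu.aestronglyMeasurable_source
      _ ≤ ENNReal.ofReal (a / X) * ENNReal.ofReal X := by
          gcongr
          exact le_self_add.trans (hf.trans (ENNReal.ofReal_le_ofReal (min_le_left _ _)))
      _ = ENNReal.ofReal a := by
          rw [← ENNReal.ofReal_mul (by positivity), div_mul_cancel₀ a hX₀.ne']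
  have hlow := hinterior b f u hu hb hfn hvol
  rcases le_or_gt (1 - ‖x‖) t with hxt | hxt
  · exact hboundary b f u m hu hm hb
      (le_add_self.trans (hf.trans (ENNReal.ofReal_le_ofReal (min_le_right _ _))))
      (fun y hy => hlow y (by linarith)) x hx hxt
  · calc m / 2 * (1 - ‖x‖) ≤ m / 2 * 1 := by gcongr; linarith [norm_nonneg x]
      _ < m := by linarith
      _ ≤ u x := hlow x (by linarith)

/-- Growth lemma in the unit ball. -/
theorem growth_lemma_unit_ball
    (n : ℕ) (hn : 2 ≤ n) (lam Lam : ℝ) (hlam : 0 < lam) (hLam : lam ≤ Lam)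
    (p q d0 K ν : ℝ) (hq : (n : ℝ) < q) (hp : (n : ℝ) ≤ p) (hpq : p ≤ q)
    (hd0 : 0 < d0) (hd0' : d0 ≤ 1 / 4) (hK : 0 < K) (hν : 0 < ν) :
    ∃ k a : ℝ, 0 < k ∧ 0 < a ∧
      ∀ b f u : EuclideanSpace ℝ (Fin n) → ℝ,
        ContinuousOn b (Metric.ball 0 1) →
        ContinuousOn f (Metric.ball 0 1) →
        (∀ x ∈ Metric.ball (0 : EuclideanSpace ℝ (Fin n)) 1, 0 ≤ b x) →
        (∀ x ∈ Metric.ball (0 : EuclideanSpace ℝ (Fin n)) 1, 0 ≤ f x) →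
        LpNormE n q b (Metric.ball 0 1) ≤ ENNReal.ofReal K →
        LpNormE n p f (Metric.ball 0 1)
            + LpNormE n q f {x ∈ Metric.ball (0 : EuclideanSpace ℝ (Fin n)) 1 | 1 - ‖x‖ < d0}
          ≤ ENNReal.ofReal a →
        ContDiffOn ℝ 2 u (Metric.ball 0 1) →
        (∀ x ∈ Metric.ball (0 : EuclideanSpace ℝ (Fin n)) 1, 0 ≤ u x) →
        (∀ x ∈ Metric.ball (0 : EuclideanSpace ℝ (Fin n)) 1,
          pucciMinus n lam Lam (hess n u x) - b x * gradNorm n u x ≤ f x) →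
        ENNReal.ofReal ν * volume (Metric.ball (0 : EuclideanSpace ℝ (Fin n)) 1)
            ≤ volume {x ∈ Metric.ball (0 : EuclideanSpace ℝ (Fin n)) 1 | 1 - ‖x‖ ≤ u x} →
        ∀ x ∈ Metric.ball (0 : EuclideanSpace ℝ (Fin n)) 1, k * (1 - ‖x‖) < u x := by
  obtain ⟨k, hk, a, ha, h⟩ := growth_lemma_unit_ball_general (by omega) hlam hLam hq hp hd0 hν K
  exact ⟨k, a, hk, ha, fun b f u hb hf _ _ hbK hfa hu hu₀ hL => h b f u
    ⟨Metric.isOpen_ball, hb.aestronglyMeasurable measurableSet_ball,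
      hf.aestronglyMeasurable measurableSet_ball, hu, hu₀, hL⟩ hbK hfa⟩
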